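/- For every integer n ≥ 1 and real q > 1, the C*-algebra B_n(q) has a composition sequence: there exist closed two-sided ideals B_n(q) = I_0 ⊇ I_1 ⊇ ⋯ ⊇ I_n ⊇ I_{n+1} = 0 such that (i) there is a surjective unital *-homomorphism from B_n(q) onto ℂ with kernel I_1 (so I_0/I_1 ≅ ℂ), and (ii) for each 1 ≤ k ≤ n there is a surjective *-homomorphism from I_k onto the C*-algebra K(ℓ²(ℕ^k)) of compact operators (isomorphic to K(ℓ²(ℤ^k)), since ℓ²(ℤ^k) and ℓ²(ℕ^k) are unitarily isomorphic) whose kernel is I_{k+1} (so I_k/I_{k+1} ≅ K(ℓ²(ℤ^k))). -/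

import Mathlib

set_option synthInstance.maxHeartbeats 1000000
set_option maxHeartbeats 1000000

noncomputable section

/-- The Hilbert space `H_n = ℓ²(ℕⁿ)`. -/
abbrev Hn (n : ℕ) : Type := lp (fun _ : (Fin n → ℕ) => ℂ) 2

/-- The standard orthonormal basis vectors `e_k`, `k ∈ ℕⁿ`, of `ℓ²(ℕⁿ)`. -/
def en {n : ℕ} (k : Fin n → ℕ) : Hn n := lp.single 2 k 1

/-- For an index `j` with `1 ≤ j+1 ≤ n` (so `w_{j+2} = γ^{⊗(n-1-j)} ⊗ α* ⊗ 1^{⊗j}`),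
the (0-based) coordinate `n - 1 - j` at which the shift `α*` acts. -/
def shiftIdx {n : ℕ} (j : Fin n) : Fin n := ⟨n - 1 - (j : ℕ), by have := j.isLt; omega⟩

/-- `IsWFamily q w` says that `w 0, …, w n` are the operators
`w_1, …, w_{n+1}` on `ℓ²(ℕⁿ)` from the paper (for the parameter `q`):
`w_1 e_k = q^{-(k_1+⋯+k_n)} e_k` and for `2 ≤ i ≤ n+1`,
`w_i e_k = q^{-(k_1+⋯+k_{n+1-i})} (1-q^{-2(k_{n+2-i}+1)})^{1/2} e_{k+δ_{n+2-i}}`.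
These are the images of the generators `u_{n+1,i}` of `C(S_q^{2n+1})` (up to a circle
factor) under the faithful representation `π_{n(n-1)⋯21}∘Δ^{n-1}`. -/
def IsWFamily (q : ℝ) {n : ℕ} (w : Fin (n + 1) → (Hn n →L[ℂ] Hn n)) : Prop :=
  (∀ k : Fin n → ℕ, w 0 (en k) = (q ^ (-(∑ m, (k m : ℤ)))) • en k) ∧
  (∀ (j : Fin n) (k : Fin n → ℕ),
    w j.succ (en k) =
      ((q ^ (-(∑ m ∈ Finset.univ.filter (fun m : Fin n => (m : ℕ) < n - 1 - (j : ℕ)), (k m : ℤ)))) *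
          Real.sqrt (1 - q ^ (-2 * ((k (shiftIdx j) : ℤ) + 1)))) •
        en (Function.update k (shiftIdx j) (k (shiftIdx j) + 1)))

/-- `B_n(q)`: the unital C*-subalgebra of bounded operators on `ℓ²(ℕⁿ)` generated by
`{w_i* w_j : 1 ≤ i, j ≤ n+1}` (the closed star-subalgebra they generate); this is the
concrete realization of the standard quantum projective space algebra `C(ℂP_q^n)`. -/
def projAlg {n : ℕ} (w : Fin (n + 1) → (Hn n →L[ℂ] Hn n)) :
    StarSubalgebra ℂ (Hn n →L[ℂ] Hn n) :=
  (StarAlgebra.adjoin ℂ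
    {x : Hn n →L[ℂ] Hn n | ∃ i j : Fin (n + 1), x = star (w i) * w j}).topologicalClosure

noncomputable section

/-- The compact operators on a complex Hilbert space `X`, as a non-unital star subalgebra
of the bounded operators (a C*-algebra).  By Schauder's theorem the condition that the
adjoint `star T` is also compact is automatic, so the carrier is exactly the set of
compact operators. -/
def compactOps (X : Type*) [NormedAddCommGroup X] [InnerProductSpace ℂ X]
    [CompleteSpace X] : NonUnitalStarSubalgebra ℂ (X →L[ℂ] X) where
  carrier := {T | IsCompactOperator ⇑T ∧ IsCompactOperator ⇑(star T)}
  zero_mem' := by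
    constructor <;> simpa using (isCompactOperator_zero (M₁ := X) (M₂ := X))
  add_mem' := by
    rintro a b ⟨ha1, ha2⟩ ⟨hb1, hb2⟩
    refine ⟨?_, ?_⟩
    · simpa [ContinuousLinearMap.coe_add] using ha1.add hb1
    · rw [star_add]; simpa [ContinuousLinearMap.coe_add] using ha2.add hb2
  mul_mem' := by
    rintro a b ⟨ha1, ha2⟩ ⟨hb1, hb2⟩
    refine ⟨?_, ?_⟩
    · simpa [ContinuousLinearMap.mul_def, ContinuousLinearMap.coe_comp] using ha1.comp_clm b
    · rw [star_mul]
      simpa [ContinuousLinearMap.mul_def, ContinuousLinearMap.coe_comp] using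
        hb2.comp_clm (star a)
  smul_mem' := by
    rintro c a ⟨ha1, ha2⟩
    refine ⟨?_, ?_⟩
    · simpa [ContinuousLinearMap.coe_smul] using ha1.smul c
    · rw [star_smul]; simpa [ContinuousLinearMap.coe_smul] using ha2.smul (star c)
  star_mem' := by
    rintro a ⟨ha1, ha2⟩
    exact ⟨ha2, by simpa [star_star] using ha1⟩

/-!
Replacing the last coordinate of a multi-index `k ∈ ℕⁿ⁺¹` by the total degree `|k|` gives an
isometry `V` from `ℓ²(ℕⁿ⁺¹)` into `ℓ²(ℕ; ℓ²(ℕⁿ))` with `V V* = diag(P_0, P_1, …)`, where `P_N` is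
the projection onto degree at most `N`. Since `P_N → 1` strongly, compressing `diag(a, a, …)` by `V`
embeds the operators `a` with `[P_N, a] → 0` isometrically and multiplicatively modulo compacts.
The compression of `w'_i* w'_j` is `w_{i+1}* w_{j+1}` modulo compacts, where `w'` and `w` are the
generators of `B_n(q)` and `B_{n+1}(q)`, while the products involving `w_1` are compact. As
`B_{n+1}(q)` contains all compact operators, this yields an extension
`0 → K(ℓ²(ℕⁿ⁺¹)) → B_{n+1}(q) → B_n(q) → 0`, along which a composition sequence of `B_n(q)` pulls
back to one of `B_{n+1}(q)`.
-/

open Filter Topology ENNReal InnerProductSpace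
open ContinuousLinearMap (adjoint)

/-! ### Block-diagonal operators on `ℓ²`-direct sums -/

theorem sum_lpSingle_apply {ι : Type*} [DecidableEq ι] {E : ι → Type*}
    [∀ i, NormedAddCommGroup (E i)] (p : ℝ≥0∞) (F : Finset ι) (x : ∀ i, E i) (j : ι) :
    (∑ i ∈ F, lp.single p i (x i)) j = if j ∈ F then x j else 0 := by
  have h := map_sum ((Pi.evalAddMonoidHom E j).comp (lp.coeFnAddMonoidHom E p))
    (fun i => lp.single p i (x i)) F
  refine h.trans ?_
  simp only [AddMonoidHom.comp_apply, lp.coeFnAddMonoidHom_apply, lp.coeFn_single,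
    Pi.evalAddMonoidHom_apply, Finset.sum_pi_single]

theorem hasSum_lpSingle_of_tendsto_zero {ι : Type*} [DecidableEq ι] {E : ι → Type*}
    [∀ i, NormedAddCommGroup (E i)] {x : lp E ∞}
    (hx : Tendsto (fun i => ‖x i‖) cofinite (𝓝 0)) :
    HasSum (fun i => lp.single ∞ i (x i)) x := by
  rw [HasSum, SummationFilter.unconditional_filter, Metric.tendsto_atTop]
  intro ε hε
  have hfin : {i | ¬ ‖x i‖ < ε / 2}.Finite := hx.eventually_lt_const (half_pos hε)
  refine ⟨hfin.toFinset, fun F hF => ?_⟩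
  have hout : ∀ i ∉ F, ‖x i‖ < ε / 2 := fun i hi =>
    not_not.1 fun h => hi (hF (hfin.mem_toFinset.2 h))
  rw [dist_comm, dist_eq_norm]
  refine (lp.norm_le_of_forall_le (half_pos hε).le fun i => ?_).trans_lt (half_lt_self hε)
  rw [lp.coeFn_sub, Pi.sub_apply, sum_lpSingle_apply]
  split_ifs with hi
  · simpa using (half_pos hε).le
  · simpa using (hout i hi).le

section BlockDiagonal

variable {𝕜 ι : Type*} [RCLike 𝕜] {G : ι → Type*} [∀ i, NormedAddCommGroup (G i)]
  [∀ i, InnerProductSpace 𝕜 (G i)]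

theorem norm_family_apply_le (x : lp (fun i => G i →L[𝕜] G i) ∞) (ξ : lp G 2) (i : ι) :
    ‖x i (ξ i)‖ ≤ ‖((‖x‖ : 𝕜) • ξ) i‖ := by
  simpa [norm_smul] using
    (x i).le_of_opNorm_le (lp.norm_apply_le_norm ENNReal.top_ne_zero x i) (ξ i)

variable [∀ i, CompleteSpace (G i)]

/-- The `*`-homomorphism sending a bounded family of operators `x i` to the block-diagonal
operator with blocks `x i` on the `ℓ²`-direct sum. -/
def blockDiag :
    lp (fun i => G i →L[𝕜] G i) ∞ →⋆ₙₐ[𝕜] (lp G 2 →L[𝕜] lp G 2) where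
  toFun x := LinearMap.mkContinuous
    { toFun := fun ξ => ⟨fun i => x i (ξ i), (lp.memℓp _).mono' (norm_family_apply_le x ξ)⟩
      map_add' := fun ξ η => by ext i; simp; rfl
      map_smul' := fun c ξ => by ext i; simp }
    ‖x‖ fun ξ => (lp.norm_mono (by simp) (norm_family_apply_le x ξ)).trans (by simp [norm_smul])
  map_smul' c x := by ext ξ i; simp
  map_zero' := by ext ξ i; simp
  map_add' x y := by ext ξ i; simp; rfl
  map_mul' x y := by ext ξ i; simp [lp.infty_coeFn_mul]
  map_star' x := by
    rw [ContinuousLinearMap.star_eq_adjoint, ContinuousLinearMap.eq_adjoint_iff]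
    intro ξ η
    simp [lp.inner_eq_tsum, ContinuousLinearMap.star_eq_adjoint,
      ContinuousLinearMap.adjoint_inner_left]

@[simp]
theorem blockDiag_apply (x : lp (fun i => G i →L[𝕜] G i) ∞) (ξ : lp G 2) (i : ι) :
    blockDiag x ξ i = x i (ξ i) := rfl

theorem norm_blockDiag_le (x : lp (fun i => G i →L[𝕜] G i) ∞) : ‖blockDiag x‖ ≤ ‖x‖ :=
  LinearMap.mkContinuous_norm_le _ (norm_nonneg x) fun ξ =>
    (lp.norm_mono (by simp) (norm_family_apply_le x ξ)).trans (by simp [norm_smul])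

theorem continuous_blockDiag : Continuous (blockDiag (𝕜 := 𝕜) (G := G)) :=
  AddMonoidHomClass.continuous_of_bound blockDiag 1 fun x => by
    simpa using norm_blockDiag_le x

theorem blockDiag_apply_single [DecidableEq ι] (x : lp (fun i => G i →L[𝕜] G i) ∞) (i : ι)
    (v : G i) : blockDiag x (lp.single 2 i v) = lp.single 2 i (x i v) := by
  ext j
  rcases eq_or_ne j i with rfl | hji <;> simp [*]

theorem blockDiag_single [DecidableEq ι] (i : ι) (T : G i →L[𝕜] G i) :
    blockDiag (lp.single ∞ i T) =
      lp.singleContinuousLinearMap 𝕜 G 2 i ∘L T ∘L lp.evalCLM 𝕜 G 2 i := by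
  ext ξ j
  rcases eq_or_ne j i with rfl | hji
  · simp [lp.evalCLM]
  · simp [hji]

theorem isCompactOperator_blockDiag {x : lp (fun i => G i →L[𝕜] G i) ∞}
    (hx : ∀ i, IsCompactOperator (x i)) (hx0 : Tendsto (fun i => ‖x i‖) cofinite (𝓝 0)) :
    IsCompactOperator (blockDiag x) := by
  classical
  have hsum := (hasSum_lpSingle_of_tendsto_zero hx0).map blockDiag continuous_blockDiag
  refine isClosed_setOfPred_isCompactOperator.mem_of_tendsto hsum (.of_forall fun F => ?_)
  refine (compactOperator (RingHom.id 𝕜) (lp G 2) (lp G 2)).sum_mem fun i _ => ?_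
  change IsCompactOperator (blockDiag (lp.single ∞ i (x i)))
  rw [blockDiag_single]
  exact ((hx i).comp_clm (lp.evalCLM 𝕜 G 2 i)).clm_comp (lp.singleContinuousLinearMap 𝕜 G 2 i)

end BlockDiagonal

section ConstantFamily

variable {𝕜 : Type*} [RCLike 𝕜] (ι : Type*) {H : Type*} [NormedAddCommGroup H]
  [InnerProductSpace 𝕜 H] [CompleteSpace H]

/-- The constant family of operators, as an element of `ℓ^∞`. -/
def constFamily : (H →L[𝕜] H) →⋆ₙₐ[𝕜] lp (fun _ : ι => H →L[𝕜] H) ∞ where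
  toFun a := ⟨fun _ => a, memℓp_infty ⟨‖a‖, by rintro _ ⟨_, rfl⟩; rfl⟩⟩
  map_smul' _ _ := rfl
  map_zero' := rfl
  map_add' _ _ := rfl
  map_mul' _ _ := rfl
  map_star' _ := rfl

@[simp]
theorem constFamily_apply (a : H →L[𝕜] H) (i : ι) : constFamily ι a i = a := rfl

theorem norm_constFamily_le (a : H →L[𝕜] H) : ‖constFamily ι a‖ ≤ ‖a‖ :=
  lp.norm_le_of_forall_le (norm_nonneg a) fun _ => le_rfl

/-- The ampliation `diag(a, a, …)` of an operator `a` on `H` to the `ℓ²`-direct sum of copies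
of `H`. -/
abbrev ampliation (a : H →L[𝕜] H) : lp (fun _ : ι => H) 2 →L[𝕜] lp (fun _ : ι => H) 2 :=
  blockDiag (constFamily ι a)

theorem norm_ampliation_le (a : H →L[𝕜] H) : ‖ampliation ι a‖ ≤ ‖a‖ :=
  (norm_blockDiag_le _).trans (norm_constFamily_le ι a)

theorem ampliation_one : ampliation ι (1 : H →L[𝕜] H) = 1 := by
  ext ξ i
  simp

theorem ampliation_mul (a b : H →L[𝕜] H) :
    ampliation ι (a * b) = ampliation ι a * ampliation ι b := by
  simp only [ampliation, map_mul]

theorem ampliation_star (a : H →L[𝕜] H) : ampliation ι (star a) = star (ampliation ι a) := by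
  simp only [ampliation, map_star]

end ConstantFamily

section Reindex

variable {𝕜 ι κ : Type*} [RCLike 𝕜] [DecidableEq κ]

theorem orthogonalFamily_lpSingle {G : κ → Type*} [∀ i, NormedAddCommGroup (G i)]
    [∀ i, InnerProductSpace 𝕜 (G i)] :
    OrthogonalFamily 𝕜 G fun i =>
      { toLinearMap := lp.lsingle (𝕜 := 𝕜) 2 i, norm_map' := lp.norm_single (by simp) i } :=
  fun i j hij v w => by
    change ⟪lp.single 2 i v, lp.single 2 j w⟫_𝕜 = 0
    rw [lp.inner_single_left, lp.single_apply_ne _ _ _ hij, inner_zero_right]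

variable (𝕜) (H : Type*) [NormedAddCommGroup H] [InnerProductSpace 𝕜 H] [CompleteSpace H]

/-- The isometry of `ℓ²`-spaces that moves the `i`-th coordinate to position `σ i`. -/
def reindexIsometry {σ : ι → κ} (hσ : Function.Injective σ) :
    lp (fun _ : ι => H) 2 →ₗᵢ[𝕜] lp (fun _ : κ => H) 2 :=
  ((orthogonalFamily_lpSingle (𝕜 := 𝕜) (G := fun _ : κ => H)).comp hσ).linearIsometry

theorem reindexIsometry_single [DecidableEq ι] {σ : ι → κ} (hσ : Function.Injective σ) (i : ι)
    (v : H) : reindexIsometry 𝕜 H hσ (lp.single 2 i v) = lp.single 2 (σ i) v :=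
  ((orthogonalFamily_lpSingle (𝕜 := 𝕜) (G := fun _ : κ => H)).comp hσ).linearIsometry_apply_single v

end Reindex

/-! ### Compact operators on Hilbert spaces -/

section StrongConvergence

variable {𝕜 α D E F : Type*} [RCLike 𝕜] [NormedAddCommGroup D] [NormedSpace 𝕜 D]
  [NormedAddCommGroup E] [NormedSpace 𝕜 E] [NormedAddCommGroup F] [NormedSpace 𝕜 F]
  {l : Filter α} {A : α → E →L[𝕜] F} {C : ℝ}

theorem equicontinuous_of_opNorm_le (hC : ∀ i, ‖A i‖ ≤ C) : Equicontinuous fun i => ⇑(A i) :=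
  (LipschitzWith.uniformEquicontinuous _ C.toNNReal fun i =>
    (A i).lipschitz.weaken (NNReal.le_toNNReal_of_coe_le (hC i))).equicontinuous

theorem tendstoUniformlyOn_zero_of_isCompact (hC : ∀ i, ‖A i‖ ≤ C)
    (hA : ∀ x, Tendsto (fun i => A i x) l (𝓝 0)) {Q : Set E} (hQ : IsCompact Q) :
    TendstoUniformlyOn (fun i => ⇑(A i)) 0 l Q := by
  have hcpt : ∀ K ∈ ({Q} : Set (Set E)), IsCompact K := by simpa using hQ
  refine UniformOnFun.tendsto_iff_tendstoUniformlyOn.1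
    ((EquicontinuousOn.tendsto_uniformOnFun_iff_pi' hcpt
      (fun K _ => (equicontinuous_of_opNorm_le hC).equicontinuousOn K) l 0).2 ?_) Q rfl
  exact tendsto_pi_nhds.2 fun x => hA x

theorem tendsto_comp_of_isCompactOperator (hC : ∀ i, ‖A i‖ ≤ C)
    (hA : ∀ x, Tendsto (fun i => A i x) l (𝓝 0)) {T : D →L[𝕜] E} (hT : IsCompactOperator T) :
    Tendsto (fun i => A i ∘L T) l (𝓝 0) := by
  have hunif := tendstoUniformlyOn_zero_of_isCompact hC hA
    (hT.isCompact_closure_image_closedBall (f := T.toLinearMap) 1)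
  refine Metric.tendsto_nhds.2 fun ε hε => ?_
  filter_upwards [Metric.tendstoUniformlyOn_iff.1 hunif (ε / 2) (half_pos hε)] with i hi
  rw [dist_zero_right]
  refine (ContinuousLinearMap.opNorm_le_of_unit_norm (half_pos hε).le fun x hx => ?_).trans_lt
    (half_lt_self hε)
  simpa using (hi (T x) (subset_closure ⟨x, by simp [hx], rfl⟩)).le

end StrongConvergence

section FiniteRank

variable {𝕜 ι E F : Type*} [RCLike 𝕜] [NormedAddCommGroup E] [InnerProductSpace 𝕜 E]
  [NormedAddCommGroup F] [InnerProductSpace 𝕜 F]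

theorem isCompactOperator_rankOne (x : E) (y : F) : IsCompactOperator (rankOne 𝕜 x y) := by
  rw [rankOne_def']
  exact (isCompactOperator_of_locallyCompactSpace_rng
    (ContinuousLinearMap.toSpanSingleton 𝕜 x)).comp_clm _

/-- The orthogonal projection onto the span of the vectors `v i`, `i ∈ s`, of an orthonormal
family `v`. -/
def coordProjection (v : ι → E) (s : Finset ι) : E →L[𝕜] E := ∑ i ∈ s, rankOne 𝕜 (v i) (v i)

theorem coordProjection_apply (v : ι → E) (s : Finset ι) (x : E) :
    coordProjection (𝕜 := 𝕜) v s x = ∑ i ∈ s, ⟪v i, x⟫_𝕜 • v i := by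
  simp [coordProjection]

theorem isCompactOperator_coordProjection (v : ι → E) (s : Finset ι) :
    IsCompactOperator (coordProjection (𝕜 := 𝕜) v s) :=
  (compactOperator (RingHom.id 𝕜) E E).sum_mem fun _ _ => isCompactOperator_rankOne _ _

theorem coordProjection_apply_self [DecidableEq ι] {v : ι → E} (hv : Orthonormal 𝕜 v)
    (s : Finset ι) (i : ι) :
    coordProjection (𝕜 := 𝕜) v s (v i) = if i ∈ s then v i else 0 := by
  simp [coordProjection_apply, orthonormal_iff_ite.1 hv]

theorem tendsto_coordProjection (b : HilbertBasis ι 𝕜 E) (x : E) :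
    Tendsto (fun s => coordProjection (𝕜 := 𝕜) b s x) atTop (𝓝 x) := by
  simp only [coordProjection_apply, ← b.repr_apply_apply]
  exact b.hasSum_repr x

variable [CompleteSpace E]

theorem isStarProjection_coordProjection {v : ι → E} (hv : Orthonormal 𝕜 v) (s : Finset ι) :
    IsStarProjection (coordProjection (𝕜 := 𝕜) v s) where
  isIdempotentElem := by
    classical
    ext x
    have hx := coordProjection_apply (𝕜 := 𝕜) v s x
    change coordProjection v s (coordProjection v s x) = coordProjection v s x
    rw [hx, map_sum]
    exact Finset.sum_congr rfl fun i hi => by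
      rw [map_smul, coordProjection_apply_self hv, if_pos hi]
  isSelfAdjoint := by
    simp [IsSelfAdjoint, coordProjection, star_sum, ContinuousLinearMap.star_eq_adjoint]

variable [CompleteSpace F]

theorem hasSum_rankOne_of_isCompactOperator (b : HilbertBasis ι 𝕜 E) {T : F →L[𝕜] E}
    (hT : IsCompactOperator T) : HasSum (fun i => rankOne 𝕜 (b i) (adjoint T (b i))) T := by
  have hsum : ∀ s, ∑ i ∈ s, rankOne 𝕜 (b i) (adjoint T (b i)) =
      T - (1 - coordProjection b s) ∘L T := fun s => by
    ext x
    simp [coordProjection_apply, ContinuousLinearMap.adjoint_inner_left]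
  have hconv := tendsto_comp_of_isCompactOperator (l := atTop)
    (A := fun s => 1 - coordProjection (𝕜 := 𝕜) b s)
    (fun s => (isStarProjection_coordProjection b.orthonormal s).one_sub.norm_le)
    (fun x => by simpa using (tendsto_coordProjection b x).const_sub x) hT
  simpa [HasSum, hsum] using hconv.const_sub T

theorem isCompactOperator_adjoint {T : F →L[𝕜] E} (hT : IsCompactOperator T) :
    IsCompactOperator (adjoint T) := by
  obtain ⟨_, b, -⟩ := exists_hilbertBasis 𝕜 E
  have hsum := (hasSum_rankOne_of_isCompactOperator b hT).map adjoint (adjoint (𝕜 := 𝕜)).continuous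
  refine isClosed_setOfPred_isCompactOperator.mem_of_tendsto hsum (.of_forall fun s => ?_)
  refine (compactOperator (RingHom.id 𝕜) E F).sum_mem fun i _ => ?_
  change IsCompactOperator (adjoint (rankOne 𝕜 (b i) (adjoint T (b i))))
  rw [adjoint_rankOne]
  exact isCompactOperator_rankOne _ _

theorem mem_of_rankOne_mem {S : Submodule 𝕜 (E →L[𝕜] E)} (hS : IsClosed (S : Set (E →L[𝕜] E)))
    (b : HilbertBasis ι 𝕜 E) (hb : ∀ i j, rankOne 𝕜 (b i) (b j) ∈ S) {T : E →L[𝕜] E}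
    (hT : IsCompactOperator T) : T ∈ S := by
  have hrank : ∀ i y, rankOne 𝕜 (b i) y ∈ S := fun i y => by
    refine hS.mem_of_tendsto ((b.hasSum_repr y).mapL (rankOne 𝕜 (b i))) (.of_forall fun s => ?_)
    refine S.sum_mem fun j _ => ?_
    simpa using S.smul_mem _ (hb i j)
  exact hS.mem_of_tendsto (hasSum_rankOne_of_isCompactOperator b hT)
    (.of_forall fun s => S.sum_mem fun i _ => hrank i _)

end FiniteRank

section CompactOps

variable {X : Type*} [NormedAddCommGroup X] [InnerProductSpace ℂ X] [CompleteSpace X]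

theorem mem_compactOps {T : X →L[ℂ] X} : T ∈ compactOps X ↔ IsCompactOperator T :=
  ⟨And.left, fun h => ⟨h, isCompactOperator_adjoint h⟩⟩

variable (X) in
theorem isClosed_compactOps : IsClosed (compactOps X : Set (X →L[ℂ] X)) := by
  simpa [Set.ext_iff, ← mem_compactOps] using
    isClosed_setOfPred_isCompactOperator (𝕜₁ := ℂ) (σ₁₂ := RingHom.id ℂ) (M₁ := X) (M₂ := X)

theorem mul_mem_compactOps_left {a : X →L[ℂ] X} (ha : a ∈ compactOps X) (b : X →L[ℂ] X) :
    b * a ∈ compactOps X :=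
  mem_compactOps.2 (ha.1.clm_comp b)

theorem mul_mem_compactOps_right {a : X →L[ℂ] X} (ha : a ∈ compactOps X) (b : X →L[ℂ] X) :
    a * b ∈ compactOps X :=
  mem_compactOps.2 (ha.1.comp_clm b)

theorem compactOps_le_of_rankOne_mem {ι : Type*} (b : HilbertBasis ι ℂ X)
    {A : StarSubalgebra ℂ (X →L[ℂ] X)} (hA : IsClosed (A : Set (X →L[ℂ] X))) {v : X}
    (hv : rankOne ℂ v v ∈ A) (hcyc : ∀ i, ∃ a ∈ A, a v = b i) {T : X →L[ℂ] X}
    (hT : T ∈ compactOps X) : T ∈ A := by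
  refine mem_of_rankOne_mem (S := A.toSubalgebra.toSubmodule) hA b (fun i j => ?_) hT.1
  obtain ⟨a, ha, hai⟩ := hcyc i
  obtain ⟨c, hc, hcj⟩ := hcyc j
  have h := mul_mem (mul_mem ha hv) (star_mem hc)
  rwa [ContinuousLinearMap.mul_def, ContinuousLinearMap.mul_def, comp_rankOne, rankOne_comp,
    ContinuousLinearMap.star_eq_adjoint, ContinuousLinearMap.adjoint_adjoint, hai, hcj] at h

end CompactOps

/-! ### Compressions of block-diagonal operators -/

section AsymptoticCentralizer

variable {ι A : Type*} [NormedRing A] [StarRing A] [NormedStarGroup A] [NormedAlgebra ℂ A]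
  [StarModule ℂ A] {p : ι → A}

/-- The elements that commute asymptotically, in norm, with a net of self-adjoint elements.
For a net of finite-rank projections increasing to `1` these are the quasi-diagonal operators. -/
def asymptoticCentralizer (l : Filter ι) (hp : ∀ i, IsSelfAdjoint (p i)) :
    StarSubalgebra ℂ A where
  carrier := {b | Tendsto (fun i => p i * b - b * p i) l (𝓝 0)}
  mul_mem' {a b} ha hb := by
    have h := (ha.mul_const b).add (hb.const_mul a)
    simp only [zero_mul, mul_zero, add_zero] at h
    exact h.congr fun i => by noncomm_ring
  add_mem' {a b} ha hb := by
    have h := Tendsto.add ha hb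
    rw [add_zero] at h
    exact h.congr fun i => by noncomm_ring
  algebraMap_mem' c := by simpa [Algebra.commutes c] using tendsto_const_nhds
  star_mem' {a} ha := by
    have h := (Tendsto.star ha).neg
    simp only [star_zero, neg_zero] at h
    exact h.congr fun i => by simp [(hp i).star_eq]

theorem mem_asymptoticCentralizer {l : Filter ι} {hp : ∀ i, IsSelfAdjoint (p i)} {b : A} :
    b ∈ asymptoticCentralizer l hp ↔ Tendsto (fun i => p i * b - b * p i) l (𝓝 0) := Iff.rfl

theorem isClosed_asymptoticCentralizer (l : Filter ι) (hp : ∀ i, IsSelfAdjoint (p i)) {C : ℝ}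
    (hC : ∀ i, ‖p i‖ ≤ C) : IsClosed (asymptoticCentralizer l hp : Set A) := by
  have hbound : ∀ i,
      ‖ContinuousLinearMap.mul ℂ A (p i) - (ContinuousLinearMap.mul ℂ A).flip (p i)‖ ≤ C + C :=
    fun i => (norm_sub_le _ _).trans <| add_le_add
      ((ContinuousLinearMap.opNorm_mul_apply_le ℂ A (p i)).trans (hC i))
      (((ContinuousLinearMap.mul ℂ A).flip.le_opNorm (p i)).trans <| by
        rw [ContinuousLinearMap.opNorm_flip]
        exact (mul_le_of_le_one_left (norm_nonneg _)
          (ContinuousLinearMap.opNorm_mul_le ℂ A)).trans (hC i))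
  exact (equicontinuous_of_opNorm_le hbound).isClosed_setOfPred_tendsto (l := l)
    (continuous_const (y := (0 : A)))

end AsymptoticCentralizer

theorem tendsto_apply_of_opNorm_le {𝕜 α E F : Type*} [RCLike 𝕜] [NormedAddCommGroup E]
    [NormedSpace 𝕜 E] [NormedAddCommGroup F] [NormedSpace 𝕜 F] {l : Filter α}
    {A : α → E →L[𝕜] F} {C : ℝ} (hC : ∀ i, ‖A i‖ ≤ C) {x : α → E} {x₀ : E} {y₀ : F}
    (hx : Tendsto x l (𝓝 x₀)) (hA : Tendsto (fun i => A i x₀) l (𝓝 y₀)) :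
    Tendsto (fun i => A i (x i)) l (𝓝 y₀) := by
  have hdiff : Tendsto (fun i => A i (x i - x₀)) l (𝓝 0) :=
    squeeze_zero_norm (fun i => (A i).le_of_opNorm_le (hC i) _) <| by
      simpa using (tendsto_iff_norm_sub_tendsto_zero.1 hx).const_mul C
  simpa using hdiff.add hA

theorem tendsto_lp_apply_cofinite {ι : Type*} {E : ι → Type*} [∀ i, NormedAddCommGroup (E i)]
    {p : ℝ≥0∞} [Fact (1 ≤ p)] (hp : p ≠ ∞) (x : lp E p) :
    Tendsto (fun i => ‖x i‖) cofinite (𝓝 0) := by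
  classical
  simpa [lp.norm_single (zero_lt_one.trans_le (Fact.out : 1 ≤ p))] using
    (lp.hasSum_single hp x).summable.tendsto_cofinite_zero.norm

theorem evalCLM_comp_adjoint {𝕜 ι : Type*} [RCLike 𝕜] {G : ι → Type*}
    [∀ i, NormedAddCommGroup (G i)] [∀ i, InnerProductSpace 𝕜 (G i)] [∀ i, CompleteSpace (G i)]
    (i : ι) : lp.evalCLM 𝕜 G 2 i ∘L adjoint (lp.evalCLM 𝕜 G 2 i) = 1 := by
  classical
  have hsingle : ∀ v, adjoint (lp.evalCLM 𝕜 G 2 i) v = lp.single 2 i v := fun v =>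
    ext_inner_right 𝕜 fun ξ => by
      rw [ContinuousLinearMap.adjoint_inner_left, lp.inner_single_left]
      rfl
  ext v
  rw [ContinuousLinearMap.comp_apply, hsingle]
  exact lp.single_apply_self 2 i v

section Compression

variable (H K : Type*) [NormedAddCommGroup H] [InnerProductSpace ℂ H] [CompleteSpace H]
  [NormedAddCommGroup K] [InnerProductSpace ℂ K] [CompleteSpace K]

/-- An isometric embedding of `K` into `ℓ²(ℕ; H)` whose range projection is block diagonal, with
compact blocks `proj N` that converge strongly to `1`. Compressing `diag(a, a, …)` to `K` then
embeds `B(H)` modulo compact operators. -/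
structure BlockCompression where
  /-- the embedding of `K` -/
  embed : K →ₗᵢ[ℂ] lp (fun _ : ℕ => H) 2
  /-- the blocks of the range projection -/
  proj : lp (fun _ : ℕ => H →L[ℂ] H) ∞
  embed_comp_adjoint :
    embed.toContinuousLinearMap ∘L adjoint embed.toContinuousLinearMap = blockDiag proj
  isCompactOperator_proj : ∀ N, IsCompactOperator (proj N)
  tendsto_proj : ∀ x, Tendsto (fun N => proj N x) atTop (𝓝 x)

namespace BlockCompression

variable {H K} (B : BlockCompression H K)

/-- The embedding `K → ℓ²(ℕ; H)` as a bounded operator. -/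
abbrev embedL : K →L[ℂ] lp (fun _ : ℕ => H) 2 := B.embed.toContinuousLinearMap

/-- The `N`-th component `K → H` of the embedding. -/
def component (N : ℕ) : K →L[ℂ] H := lp.evalCLM ℂ (fun _ : ℕ => H) 2 N ∘L B.embedL

theorem component_apply (N : ℕ) (x : K) : B.component N x = B.embed x N := rfl

theorem norm_component_le (N : ℕ) : ‖B.component N‖ ≤ 1 :=
  ContinuousLinearMap.opNorm_le_bound _ zero_le_one fun x => by
    rw [component_apply, one_mul, ← B.embed.norm_map x]
    exact lp.norm_apply_le_norm two_ne_zero _ N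

theorem norm_adjoint_component_le (N : ℕ) : ‖adjoint (B.component N)‖ ≤ 1 :=
  ((adjoint (𝕜 := ℂ)).norm_map (B.component N)).trans_le (B.norm_component_le N)

theorem tendsto_component (x : K) : Tendsto (fun N => B.component N x) atTop (𝓝 0) := by
  rw [tendsto_zero_iff_norm_tendsto_zero, ← Nat.cofinite_eq_atTop]
  exact tendsto_lp_apply_cofinite ENNReal.ofNat_ne_top (B.embed x)

theorem component_comp_embed_adjoint (N : ℕ) :
    B.component N ∘L adjoint B.embedL = B.proj N ∘L lp.evalCLM ℂ (fun _ : ℕ => H) 2 N := by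
  rw [component, ContinuousLinearMap.comp_assoc, B.embed_comp_adjoint]
  rfl

theorem proj_eq_component_comp_adjoint (N : ℕ) :
    B.proj N = B.component N ∘L adjoint (B.component N) := by
  nth_rw 2 [component]
  rw [ContinuousLinearMap.adjoint_comp, ← ContinuousLinearMap.comp_assoc,
    B.component_comp_embed_adjoint, ContinuousLinearMap.comp_assoc, evalCLM_comp_adjoint]
  rfl

theorem isSelfAdjoint_proj (N : ℕ) : IsSelfAdjoint (B.proj N) := by
  rw [B.proj_eq_component_comp_adjoint, ContinuousLinearMap.isSelfAdjoint_iff',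
    ContinuousLinearMap.adjoint_comp, ContinuousLinearMap.adjoint_adjoint]

theorem norm_proj_le (N : ℕ) : ‖B.proj N‖ ≤ ‖B.proj‖ := lp.norm_apply_le_norm top_ne_zero _ N

/-- The compression of `diag(a, a, …)` to `K`. -/
def compress : (H →L[ℂ] H) →L[ℂ] (K →L[ℂ] K) :=
  LinearMap.mkContinuous
    { toFun := fun a => adjoint B.embedL ∘L ampliation ℕ a ∘L B.embedL
      map_add' := fun a b => by simp [ampliation]
      map_smul' := fun c a => by simp [ampliation] }
    1 fun a => by
      have hV := B.embed.norm_toContinuousLinearMap_le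
      have hV' := (adjoint (𝕜 := ℂ)).norm_map B.embedL
      calc ‖adjoint B.embedL ∘L ampliation ℕ a ∘L B.embedL‖
        _ ≤ ‖adjoint B.embedL‖ * (‖ampliation ℕ a‖ * ‖B.embedL‖) :=
          (ContinuousLinearMap.opNorm_comp_le _ _).trans <|
            mul_le_mul_of_nonneg_left (ContinuousLinearMap.opNorm_comp_le _ _) (norm_nonneg _)
        _ ≤ 1 * (‖a‖ * 1) := by
          rw [hV']
          gcongr
          exact norm_ampliation_le ℕ a
        _ = 1 * ‖a‖ := by rw [mul_one]

theorem compress_apply (a : H →L[ℂ] H) :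
    B.compress a = adjoint B.embedL ∘L ampliation ℕ a ∘L B.embedL := rfl

theorem compress_one : B.compress 1 = 1 := by
  rw [compress_apply, ampliation_one]
  exact B.embed.adjoint_comp_self

theorem compress_star (a : H →L[ℂ] H) : B.compress (star a) = star (B.compress a) := by
  rw [compress_apply, ampliation_star]
  simp only [compress_apply, ContinuousLinearMap.star_eq_adjoint,
    ContinuousLinearMap.adjoint_comp, ContinuousLinearMap.comp_assoc,
    ContinuousLinearMap.adjoint_adjoint]

theorem component_comp_compress_comp_adjoint (a : H →L[ℂ] H) (N : ℕ) :
    B.component N ∘L B.compress a ∘L adjoint (B.component N) = B.proj N ∘L a ∘L B.proj N := by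
  have hadj := congr(adjoint $(B.component_comp_embed_adjoint N))
  simp only [ContinuousLinearMap.adjoint_comp, ContinuousLinearMap.adjoint_adjoint,
    ContinuousLinearMap.isSelfAdjoint_iff'.1 (B.isSelfAdjoint_proj N)] at hadj
  have heval : lp.evalCLM ℂ (fun _ : ℕ => H) 2 N ∘L ampliation ℕ a =
    a ∘L lp.evalCLM ℂ (fun _ : ℕ => H) 2 N := rfl
  calc B.component N ∘L B.compress a ∘L adjoint (B.component N)
    _ = (B.component N ∘L adjoint B.embedL) ∘L ampliation ℕ a ∘L
          B.embedL ∘L adjoint (B.component N) := rfl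
    _ = B.proj N ∘L (lp.evalCLM ℂ (fun _ : ℕ => H) 2 N ∘L ampliation ℕ a) ∘L
          adjoint (lp.evalCLM ℂ (fun _ : ℕ => H) 2 N) ∘L B.proj N := by
      rw [hadj, B.component_comp_embed_adjoint]
      rfl
    _ = B.proj N ∘L a ∘L (lp.evalCLM ℂ (fun _ : ℕ => H) 2 N ∘L
          adjoint (lp.evalCLM ℂ (fun _ : ℕ => H) 2 N)) ∘L B.proj N := by
      rw [heval]
      rfl
    _ = B.proj N ∘L a ∘L B.proj N := by
      rw [evalCLM_comp_adjoint]
      rfl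

theorem tendsto_component_of_sub_compress {a : H →L[ℂ] H} {y : K →L[ℂ] K}
    (h : IsCompactOperator (y - B.compress a)) (x : H) :
    Tendsto (fun N => B.component N (y (adjoint (B.component N) x))) atTop (𝓝 (a x)) := by
  have hmain := tendsto_apply_of_opNorm_le B.norm_proj_le
    ((a.continuous.tendsto x).comp (B.tendsto_proj x)) (B.tendsto_proj (a x))
  have hcpt := tendsto_comp_of_isCompactOperator B.norm_component_le B.tendsto_component h
  have herr : Tendsto (fun N => B.component N ((y - B.compress a) (adjoint (B.component N) x)))
      atTop (𝓝 0) :=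
    squeeze_zero_norm
      (fun N => (B.component N ∘L (y - B.compress a)).le_opNorm_of_le
        ((adjoint (B.component N)).le_of_opNorm_le (B.norm_adjoint_component_le N) x))
      (by simpa using hcpt.norm.mul_const (1 * ‖x‖))
  have hsum := hmain.add herr
  rw [add_zero] at hsum
  refine hsum.congr fun N => ?_
  have hcomp := congr($(B.component_comp_compress_comp_adjoint a N) x)
  simp only [ContinuousLinearMap.comp_apply] at hcomp
  simp [← hcomp]

theorem norm_le_of_sub_compress {a : H →L[ℂ] H} {y : K →L[ℂ] K}
    (h : IsCompactOperator (y - B.compress a)) : ‖a‖ ≤ ‖y‖ := by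
  refine a.opNorm_le_bound (norm_nonneg y) fun x => ?_
  refine le_of_tendsto (B.tendsto_component_of_sub_compress h x).norm (.of_forall fun N => ?_)
  calc ‖B.component N (y (adjoint (B.component N) x))‖
    _ ≤ 1 * (‖y‖ * (1 * ‖x‖)) :=
      (B.component N).le_of_opNorm_le_of_le (B.norm_component_le N) <| y.le_opNorm_of_le <|
        (adjoint (B.component N)).le_of_opNorm_le (B.norm_adjoint_component_le N) x
    _ = ‖y‖ * ‖x‖ := by rw [one_mul, one_mul]

/-- The operators on `H` that commute asymptotically with the blocks of the range projection. -/
def quasiDiagonal : StarSubalgebra ℂ (H →L[ℂ] H) :=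
  asymptoticCentralizer atTop B.isSelfAdjoint_proj

theorem isClosed_quasiDiagonal : IsClosed (B.quasiDiagonal : Set (H →L[ℂ] H)) :=
  isClosed_asymptoticCentralizer _ _ B.norm_proj_le

theorem tendsto_proj_mul_of_isCompactOperator {a : H →L[ℂ] H} (ha : IsCompactOperator a) :
    Tendsto (fun N => B.proj N * a) atTop (𝓝 a) := by
  have h := tendsto_comp_of_isCompactOperator (l := atTop) (A := fun N => B.proj N - 1)
    (C := ‖B.proj‖ + ‖(1 : H →L[ℂ] H)‖)
    (fun N => (norm_sub_le _ _).trans (add_le_add_left (B.norm_proj_le N) _))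
    (fun x => by simpa using (B.tendsto_proj x).sub_const x) ha
  refine (by simpa using h.add_const a : Tendsto _ _ (𝓝 a)).congr fun N => ?_
  ext x
  simp

theorem compactOps_le_quasiDiagonal {a : H →L[ℂ] H} (ha : a ∈ compactOps H) :
    a ∈ B.quasiDiagonal := by
  have hleft := B.tendsto_proj_mul_of_isCompactOperator ha.1
  have hright := (B.tendsto_proj_mul_of_isCompactOperator ha.2).star
  simp only [star_mul, star_star, (B.isSelfAdjoint_proj _).star_eq] at hright
  refine mem_asymptoticCentralizer.2 ?_
  simpa using hleft.sub hright

theorem compress_mul_compress_sub (a b : H →L[ℂ] H) :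
    B.compress a * B.compress b - B.compress (a * b) = adjoint B.embedL ∘L
      blockDiag (constFamily ℕ a * (B.proj * constFamily ℕ b - constFamily ℕ b * B.proj)) ∘L
        B.embedL := by
  have hVV : B.embedL ∘L adjoint B.embedL = blockDiag B.proj := B.embed_comp_adjoint
  have hV : blockDiag B.proj ∘L B.embedL = B.embedL := by
    rw [← hVV, ContinuousLinearMap.comp_assoc, B.embed.adjoint_comp_self]
    rfl
  have hmul : B.compress a * B.compress b =
      adjoint B.embedL ∘L (ampliation ℕ a * (blockDiag B.proj * ampliation ℕ b)) ∘L B.embedL := by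
    rw [← hVV]
    rfl
  have hcomp : B.compress (a * b) =
      adjoint B.embedL ∘L (ampliation ℕ a * (ampliation ℕ b * blockDiag B.proj)) ∘L B.embedL := by
    rw [compress_apply, ampliation_mul]
    change _ = adjoint B.embedL ∘L (ampliation ℕ a * ampliation ℕ b) ∘L
      (blockDiag B.proj ∘L B.embedL)
    rw [hV]
  rw [hmul, hcomp, ← ContinuousLinearMap.comp_sub, ← ContinuousLinearMap.sub_comp, ← mul_sub]
  simp only [map_mul, map_sub]

theorem compress_mul_compress_sub_mem_compactOps (a : H →L[ℂ] H) {b : H →L[ℂ] H}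
    (hb : b ∈ B.quasiDiagonal) :
    B.compress a * B.compress b - B.compress (a * b) ∈ compactOps K := by
  let d := constFamily ℕ a * (B.proj * constFamily ℕ b - constFamily ℕ b * B.proj)
  have hd_apply : ∀ N, d N = a * (B.proj N * b - b * B.proj N) := fun N => rfl
  have hd : IsCompactOperator (blockDiag d) := by
    refine isCompactOperator_blockDiag (fun N => ?_) ?_
    · have hP := mem_compactOps.2 (B.isCompactOperator_proj N)
      exact (mul_mem_compactOps_left
        (sub_mem (mul_mem_compactOps_right hP b) (mul_mem_compactOps_left hP b)) a).1
    · rw [Nat.cofinite_eq_atTop]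
      simpa [hd_apply] using ((mem_asymptoticCentralizer.1 hb).const_mul a).norm
  rw [compress_mul_compress_sub]
  exact mem_compactOps.2 ((hd.comp_clm B.embedL).clm_comp (adjoint B.embedL))

theorem star_mul_sub_compress_mem_compactOps
    {S : lp (fun _ : ℕ => H) 2 →ₗᵢ[ℂ] lp (fun _ : ℕ => H) 2} {a b : H →L[ℂ] H} {y z : K →L[ℂ] K}
    (hy : IsCompactOperator
      (B.embedL ∘L y - S.toContinuousLinearMap ∘L ampliation ℕ a ∘L B.embedL))
    (hz : IsCompactOperator
      (B.embedL ∘L z - S.toContinuousLinearMap ∘L ampliation ℕ b ∘L B.embedL)) :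
    star y * z - B.compress (star a * b) ∈ compactOps K := by
  have hprod : star y * z = adjoint (B.embedL ∘L y) ∘L (B.embedL ∘L z) := by
    rw [ContinuousLinearMap.adjoint_comp, ContinuousLinearMap.comp_assoc,
      ← ContinuousLinearMap.comp_assoc (adjoint B.embedL), B.embed.adjoint_comp_self]
    rfl
  have hcomp : B.compress (star a * b) =
      adjoint (S.toContinuousLinearMap ∘L ampliation ℕ a ∘L B.embedL) ∘L
        (S.toContinuousLinearMap ∘L ampliation ℕ b ∘L B.embedL) := by
    rw [ContinuousLinearMap.adjoint_comp, ContinuousLinearMap.comp_assoc,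
      ← ContinuousLinearMap.comp_assoc (adjoint S.toContinuousLinearMap), S.adjoint_comp_self,
      compress_apply, ContinuousLinearMap.adjoint_comp, ampliation_mul, ampliation_star]
    rfl
  rw [hprod, hcomp, mem_compactOps]
  set Y := B.embedL ∘L y
  set Z := B.embedL ∘L z
  set Y' := S.toContinuousLinearMap ∘L ampliation ℕ a ∘L B.embedL
  set Z' := S.toContinuousLinearMap ∘L ampliation ℕ b ∘L B.embedL
  have hsplit : adjoint Y ∘L Z - adjoint Y' ∘L Z' =
      adjoint Y ∘L (Z - Z') + adjoint (Y - Y') ∘L Z' := by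
    simp [ContinuousLinearMap.comp_sub, ContinuousLinearMap.sub_comp]
  rw [hsplit]
  exact (hz.clm_comp (adjoint Y)).add ((isCompactOperator_adjoint hy).comp_clm Z')

/-- The pairs `(y, a)` with `a` quasi-diagonal and `y` a compact perturbation of the compression
of `a`: the graph of the symbol map `y ↦ a`. -/
def symbolGraph : StarSubalgebra ℂ ((K →L[ℂ] K) × (H →L[ℂ] H)) where
  carrier := {x | x.2 ∈ B.quasiDiagonal ∧ x.1 - B.compress x.2 ∈ compactOps K}
  mul_mem' {x x'} hx hx' := by
    refine ⟨mul_mem hx.1 hx'.1, ?_⟩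
    have h₁ := mul_mem_compactOps_right hx.2 x'.1
    have h₂ := mul_mem_compactOps_left hx'.2 (B.compress x.2)
    have h₃ := B.compress_mul_compress_sub_mem_compactOps x.2 hx'.1
    convert add_mem (add_mem h₁ h₂) h₃ using 1
    simp only [Prod.fst_mul, Prod.snd_mul]
    noncomm_ring
  add_mem' {x x'} hx hx' := by
    refine ⟨add_mem hx.1 hx'.1, ?_⟩
    simpa [add_sub_add_comm] using add_mem hx.2 hx'.2
  algebraMap_mem' c := by
    refine ⟨algebraMap_mem _ c, ?_⟩
    simp [Algebra.algebraMap_eq_smul_one, B.compress_one]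
  star_mem' {x} hx := by
    refine ⟨star_mem hx.1, ?_⟩
    simpa [B.compress_star] using star_mem hx.2

theorem isClosed_symbolGraph : IsClosed (B.symbolGraph : Set ((K →L[ℂ] K) × (H →L[ℂ] H))) :=
  (B.isClosed_quasiDiagonal.preimage continuous_snd).inter <|
    (isClosed_compactOps K).preimage <|
      continuous_fst.sub (B.compress.continuous.comp continuous_snd)

theorem norm_le_of_mem_symbolGraph {y : K →L[ℂ] K} {a : H →L[ℂ] H} (h : (y, a) ∈ B.symbolGraph) :
    ‖a‖ ≤ ‖y‖ :=
  B.norm_le_of_sub_compress h.2.1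

theorem eq_of_mem_symbolGraph {y : K →L[ℂ] K} {a a' : H →L[ℂ] H} (ha : (y, a) ∈ B.symbolGraph)
    (ha' : (y, a') ∈ B.symbolGraph) : a = a' := by
  have hsub : ((0 : K →L[ℂ] K), a - a') ∈ B.symbolGraph := by simpa using sub_mem ha ha'
  simpa [sub_eq_zero] using B.norm_le_of_mem_symbolGraph hsub

theorem isClosed_map_fst_of_le_symbolGraph {G : StarSubalgebra ℂ ((K →L[ℂ] K) × (H →L[ℂ] H))}
    (hG : G ≤ B.symbolGraph) (hGc : IsClosed (G : Set ((K →L[ℂ] K) × (H →L[ℂ] H)))) :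
    IsClosed (G.map (StarAlgHom.fst ℂ _ _) : Set (K →L[ℂ] K)) := by
  have : CompleteSpace G := hGc.completeSpace_coe
  have hanti : AntilipschitzWith 1 fun x : G => x.1.1 := AddMonoidHomClass.antilipschitz_of_bound
    ((AddMonoidHom.fst _ _).comp G.toSubalgebra.toSubmodule.toAddSubgroup.subtype) fun x => by
      have h := B.norm_le_of_mem_symbolGraph (hG x.2)
      simpa [Prod.norm_def] using h
  have hrange := hanti.isClosed_range (uniformContinuous_fst.comp uniformContinuous_subtype_val)
  have himage : (G.map (StarAlgHom.fst ℂ _ _) : Set (K →L[ℂ] K)) =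
      Set.range fun x : G => x.1.1 := by
    ext y
    simp
  rwa [himage]

variable {A : StarSubalgebra ℂ (K →L[ℂ] K)} {A' : StarSubalgebra ℂ (H →L[ℂ] H)}

theorem exists_snd_mem_symbolGraph (hA' : IsClosed (A' : Set (H →L[ℂ] H)))
    {s : Set (K →L[ℂ] K)} (hs : ∀ y ∈ s, ∃ a ∈ A', (y, a) ∈ B.symbolGraph) {y : K →L[ℂ] K}
    (hy : y ∈ (StarAlgebra.adjoin ℂ s).topologicalClosure) : ∃ a ∈ A', (y, a) ∈ B.symbolGraph := by
  let G := B.symbolGraph ⊓ A'.comap (StarAlgHom.snd ℂ (K →L[ℂ] K) (H →L[ℂ] H))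
  have hmem : ∀ y, y ∈ G.map (StarAlgHom.fst ℂ _ _) ↔ ∃ a ∈ A', (y, a) ∈ B.symbolGraph :=
    fun y => by simp [G, and_comm]
  have hclosed := B.isClosed_map_fst_of_le_symbolGraph (G := G) inf_le_left
    (B.isClosed_symbolGraph.inter (hA'.preimage continuous_snd))
  exact (hmem y).1 <| StarSubalgebra.topologicalClosure_minimal
    (StarAlgebra.adjoin_le fun z hz => (hmem z).2 (hs z hz)) hclosed hy

theorem exists_fst_mem_symbolGraph (hA : IsClosed (A : Set (K →L[ℂ] K)))
    (hcpt : ∀ y ∈ compactOps K, y ∈ A)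
    {s : Set (H →L[ℂ] H)} (hs : ∀ a ∈ s, ∃ y ∈ A, (y, a) ∈ B.symbolGraph) {a : H →L[ℂ] H}
    (ha : a ∈ (StarAlgebra.adjoin ℂ s).topologicalClosure) : ∃ y ∈ A, (y, a) ∈ B.symbolGraph := by
  let D := (B.symbolGraph ⊓ A.comap (StarAlgHom.fst ℂ (K →L[ℂ] K) (H →L[ℂ] H))).map
    (StarAlgHom.snd ℂ _ _)
  have hmem : ∀ a, a ∈ D ↔ ∃ y ∈ A, (y, a) ∈ B.symbolGraph := fun a => by simp [D, and_comm]
  have hD : (D : Set (H →L[ℂ] H)) =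
      (B.quasiDiagonal : Set (H →L[ℂ] H)) ∩ B.compress ⁻¹' A := by
    ext a
    refine (hmem a).trans ⟨fun ⟨y, hy, hya⟩ => ⟨hya.1, ?_⟩, fun ⟨ha, haA⟩ =>
      ⟨B.compress a, haA, ha, by simp⟩⟩
    simpa using sub_mem hy (hcpt _ hya.2)
  have hclosed : IsClosed (D : Set (H →L[ℂ] H)) :=
    hD ▸ B.isClosed_quasiDiagonal.inter (hA.preimage B.compress.continuous)
  exact (hmem a).1 <| StarSubalgebra.topologicalClosure_minimal
    (StarAlgebra.adjoin_le fun z hz => (hmem z).2 (hs z hz)) hclosed ha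

theorem exists_symbolHom (hA : ∀ y ∈ A, ∃ a ∈ A', (y, a) ∈ B.symbolGraph)
    (hA' : ∀ a ∈ A', ∃ y ∈ A, (y, a) ∈ B.symbolGraph) :
    ∃ ρ : A →⋆ₐ[ℂ] A', Continuous ρ ∧ Function.Surjective ρ ∧
      ∀ y, ρ y = 0 ↔ (y : K →L[ℂ] K) ∈ compactOps K := by
  have hex : ∀ y : A, ∃ a : A', (y.1, a.1) ∈ B.symbolGraph := fun y => by
    obtain ⟨a, ha, hya⟩ := hA y y.2
    exact ⟨⟨a, ha⟩, hya⟩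
  choose ρ hρ using hex
  have hρ_eq : ∀ (y : A) (a : A'), (y.1, a.1) ∈ B.symbolGraph → ρ y = a := fun y a h =>
    Subtype.ext (B.eq_of_mem_symbolGraph (hρ y) h)
  refine ⟨{
      toFun := ρ
      map_one' := hρ_eq 1 1 (one_mem B.symbolGraph)
      map_mul' := fun y z => hρ_eq _ _ (by simpa using mul_mem (hρ y) (hρ z))
      map_zero' := hρ_eq 0 0 (zero_mem B.symbolGraph)
      map_add' := fun y z => hρ_eq _ _ (by simpa using add_mem (hρ y) (hρ z))
      commutes' := fun c => hρ_eq _ (algebraMap ℂ A' c) (algebraMap_mem B.symbolGraph c)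
      map_star' := fun y => hρ_eq _ _ (by simpa [Prod.star_def] using star_mem (hρ y)) },
    AddMonoidHomClass.continuous_of_bound _ 1 fun y => ?_, fun a => ?_, fun y => ?_⟩
  · simpa using B.norm_le_of_mem_symbolGraph (hρ y)
  · obtain ⟨y, hy, hya⟩ := hA' a a.2
    exact ⟨⟨y, hy⟩, hρ_eq ⟨y, hy⟩ a hya⟩
  · refine ⟨fun h => ?_, fun h => hρ_eq y 0 ⟨zero_mem _, by simpa using h⟩⟩
    have hy := (hρ y).2
    rw [show ρ y = 0 from h] at hy
    simpa using hy

end BlockCompression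

end Compression

/-! ### Composition sequences -/

section CompositionSequence

variable {A B : Type*} [Ring A] [StarRing A] [Algebra ℂ A] [Ring B] [StarRing B] [Algebra ℂ B]
  {C : ℕ → Type*} [∀ k, NonUnitalSemiring (C k)] [∀ k, Star (C k)] [∀ k, Module ℂ (C k)]

variable (C) in
/-- A composition sequence `A = I 0 ⊇ I 1 ⊇ ⋯ ⊇ I (n + 1) = 0` of closed two-sided ideals of a
topological star algebra, with `I 0 / I 1 ≅ ℂ` and `I k / I (k + 1) ≅ C k` for `1 ≤ k ≤ n`. The
isomorphisms are encoded by surjective homomorphisms with the right kernels, and the ideals by star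
subalgebras absorbing multiplication; the values `I k` with `k > n + 1` are irrelevant. -/
structure IsCompositionSequence [TopologicalSpace A] (n : ℕ)
    (I : ℕ → NonUnitalStarSubalgebra ℂ A) : Prop where
  mem_zero : ∀ x, x ∈ I 0
  succ_le : ∀ k, k ≤ n → I (k + 1) ≤ I k
  mem_last : ∀ x, x ∈ I (n + 1) ↔ x = 0
  isClosed : ∀ k, k ≤ n + 1 → IsClosed (I k : Set A)
  mul_mem : ∀ k, k ≤ n + 1 → ∀ a x : A, a ∈ I k → x * a ∈ I k ∧ a * x ∈ I k
  exists_character : ∃ φ : A →⋆ₐ[ℂ] ℂ, Function.Surjective φ ∧ ∀ x, φ x = 0 ↔ x ∈ I 1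
  exists_factor : ∀ k, 1 ≤ k → k ≤ n → ∃ ψ : I k →⋆ₙₐ[ℂ] C k,
    Function.Surjective ψ ∧ ∀ x : I k, ψ x = 0 ↔ (x : A) ∈ I (k + 1)

variable [StarModule ℂ A]

variable (C) in
theorem isCompositionSequence_zero [TopologicalSpace A] [T1Space A] {φ : A →⋆ₐ[ℂ] ℂ}
    (hφ : Function.Bijective φ) :
    IsCompositionSequence C 0 fun k => if k = 0 then (⊤ : NonUnitalStarSubalgebra ℂ A) else ⊥ where
  mem_zero _ := NonUnitalStarAlgebra.mem_top
  succ_le k _ := by simp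
  mem_last x := NonUnitalStarAlgebra.mem_bot
  isClosed k _ := by split_ifs <;> simp
  mul_mem k _ a x ha := by
    split_ifs at ha ⊢
    · exact ⟨NonUnitalStarAlgebra.mem_top, NonUnitalStarAlgebra.mem_top⟩
    · simp [NonUnitalStarAlgebra.mem_bot.1 ha]
  exists_character := ⟨φ, hφ.surjective, fun x => by
    rw [map_eq_zero_iff φ hφ.injective]
    exact NonUnitalStarAlgebra.mem_bot.symm⟩
  exists_factor k _ _ := by omega

/-- The chain of ideals `ρ⁻¹(I 0) ⊇ ⋯ ⊇ ρ⁻¹(I m) ⊇ 0` of the source of `ρ`. -/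
def pullbackChain (ρ : A →⋆ₐ[ℂ] B) (m : ℕ) (I : ℕ → NonUnitalStarSubalgebra ℂ B) (k : ℕ) :
    NonUnitalStarSubalgebra ℂ A :=
  if k ≤ m then (I k).comap ρ.toNonUnitalStarAlgHom else ⊥

variable {ρ : A →⋆ₐ[ℂ] B} {k m n : ℕ} {I : ℕ → NonUnitalStarSubalgebra ℂ B} {x : A}

theorem mem_pullbackChain_of_le (h : k ≤ m) : x ∈ pullbackChain ρ m I k ↔ ρ x ∈ I k := by
  rw [pullbackChain, if_pos h]
  rfl

theorem mem_pullbackChain_of_lt (h : m < k) : x ∈ pullbackChain ρ m I k ↔ x = 0 := by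
  rw [pullbackChain, if_neg h.not_ge]
  exact NonUnitalStarAlgebra.mem_bot

namespace IsCompositionSequence

variable [TopologicalSpace B]

theorem pullbackChain_succ_le (hI : IsCompositionSequence C n I) (hk : k ≤ n + 1) :
    pullbackChain ρ (n + 1) I (k + 1) ≤ pullbackChain ρ (n + 1) I k := by
  intro x hx
  rcases hk.lt_or_eq with h | rfl
  · rw [mem_pullbackChain_of_le (by omega)] at hx ⊢
    exact hI.succ_le k (by omega) hx
  · rw [mem_pullbackChain_of_lt (by omega)] at hx
    exact hx ▸ zero_mem _

theorem isClosed_pullbackChain [TopologicalSpace A] [T1Space A]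
    (hI : IsCompositionSequence C n I) (hρ : Continuous ρ) :
    IsClosed (pullbackChain ρ (n + 1) I k : Set A) := by
  rcases le_or_gt k (n + 1) with h | h
  · convert (hI.isClosed k h).preimage hρ
    exact Set.ext fun _ => mem_pullbackChain_of_le h
  · convert isClosed_singleton (x := (0 : A))
    exact Set.ext fun _ => mem_pullbackChain_of_lt h

theorem mul_mem_pullbackChain (hI : IsCompositionSequence C n I) {a : A}
    (ha : a ∈ pullbackChain ρ (n + 1) I k) :
    x * a ∈ pullbackChain ρ (n + 1) I k ∧ a * x ∈ pullbackChain ρ (n + 1) I k := by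
  rcases le_or_gt k (n + 1) with h | h
  · simp only [mem_pullbackChain_of_le h, map_mul] at ha ⊢
    exact hI.mul_mem k h _ _ ha
  · rw [mem_pullbackChain_of_lt h] at ha
    simp [ha]

theorem exists_factor_pullbackChain (hI : IsCompositionSequence C n I)
    (hρ : Function.Surjective ρ) (hk : 1 ≤ k) (hkn : k ≤ n) :
    ∃ ψ : pullbackChain ρ (n + 1) I k →⋆ₙₐ[ℂ] C k, Function.Surjective ψ ∧
      ∀ x : pullbackChain ρ (n + 1) I k,
        ψ x = 0 ↔ (x : A) ∈ pullbackChain ρ (n + 1) I (k + 1) := by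
  obtain ⟨ψ, hψ, hker⟩ := hI.exists_factor k hk hkn
  have hmem (x : A) : x ∈ pullbackChain ρ (n + 1) I k ↔ ρ x ∈ I k :=
    mem_pullbackChain_of_le (by omega)
  let r : pullbackChain ρ (n + 1) I k →⋆ₙₐ[ℂ] I k := NonUnitalStarAlgHom.codRestrict
    (ρ.toNonUnitalStarAlgHom.comp (NonUnitalStarSubalgebraClass.subtype _)) (I k)
    fun x => (hmem x).1 x.2
  have hr : Function.Surjective r := fun y =>
    let ⟨x, hx⟩ := hρ y
    ⟨⟨x, (hmem x).2 (hx ▸ y.2)⟩, Subtype.ext hx⟩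
  refine ⟨ψ.comp r, hψ.comp hr, fun x => ?_⟩
  rw [mem_pullbackChain_of_le (by omega)]
  exact hker (r x)

theorem exists_last_factor_pullbackChain [StarModule ℂ B] (hI : IsCompositionSequence C n I)
    {ψ : (⊥ : NonUnitalStarSubalgebra ℂ B).comap ρ.toNonUnitalStarAlgHom →⋆ₙₐ[ℂ] C (n + 1)}
    (hψ : Function.Bijective ψ) :
    ∃ ψ : pullbackChain ρ (n + 1) I (n + 1) →⋆ₙₐ[ℂ] C (n + 1), Function.Surjective ψ ∧
      ∀ x : pullbackChain ρ (n + 1) I (n + 1),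
        ψ x = 0 ↔ (x : A) ∈ pullbackChain ρ (n + 1) I (n + 1 + 1) := by
  have hker : pullbackChain ρ (n + 1) I (n + 1) =
      (⊥ : NonUnitalStarSubalgebra ℂ B).comap ρ.toNonUnitalStarAlgHom := by
    ext x
    rw [mem_pullbackChain_of_le le_rfl, hI.mem_last]
    exact NonUnitalStarAlgebra.mem_bot.symm
  rw [hker]
  refine ⟨ψ, hψ.surjective, fun x => ?_⟩
  rw [mem_pullbackChain_of_lt (by omega), map_eq_zero_iff ψ hψ.injective, ZeroMemClass.coe_eq_zero]

protected theorem pullbackChain [TopologicalSpace A] [T1Space A] [StarModule ℂ B]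
    (hI : IsCompositionSequence C n I) (hρc : Continuous ρ) (hρ : Function.Surjective ρ)
    {ψ : (⊥ : NonUnitalStarSubalgebra ℂ B).comap ρ.toNonUnitalStarAlgHom →⋆ₙₐ[ℂ] C (n + 1)}
    (hψ : Function.Bijective ψ) :
    IsCompositionSequence C (n + 1) (pullbackChain ρ (n + 1) I) where
  mem_zero _ := (mem_pullbackChain_of_le (by omega)).2 (hI.mem_zero _)
  succ_le _ hk := hI.pullbackChain_succ_le hk
  mem_last _ := mem_pullbackChain_of_lt (by omega)
  isClosed _ _ := hI.isClosed_pullbackChain hρc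
  mul_mem _ _ _ _ ha := hI.mul_mem_pullbackChain ha
  exists_character := by
    obtain ⟨φ, hφ, hker⟩ := hI.exists_character
    exact ⟨φ.comp ρ, hφ.comp hρ, fun x => by
      rw [mem_pullbackChain_of_le (by omega), ← hker, StarAlgHom.comp_apply]⟩
  exists_factor k hk hkn := by
    rcases hkn.lt_or_eq with h | rfl
    · exact hI.exists_factor_pullbackChain hρ hk (by omega)
    · exact hI.exists_last_factor_pullbackChain hψ

end IsCompositionSequence

end CompositionSequence

/-! ### Weighted shifts -/

section WeightedShift

variable {𝕜 ι E F : Type*} [RCLike 𝕜] [NormedAddCommGroup E] [InnerProductSpace 𝕜 E]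
  [NormedAddCommGroup F] [InnerProductSpace 𝕜 F]

theorem clm_ext_hilbertBasis (b : HilbertBasis ι 𝕜 E) {S T : E →L[𝕜] F}
    (h : ∀ i, S (b i) = T (b i)) : S = T :=
  ContinuousLinearMap.ext_on (Submodule.dense_iff_topologicalClosure_eq_top.2 b.dense_span)
    (Set.forall_mem_range.2 h)

variable [CompleteSpace F] (b : HilbertBasis ι 𝕜 E) {f : ι → F} (hf : Orthonormal 𝕜 f)

/-- The operator sending the basis vector `b i` to a multiple of the vector `f i` of an orthonormal
family; the weights `c i` are encoded as operators on `𝕜`. -/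
def weightedShift (c : lp (fun _ : ι => 𝕜 →L[𝕜] 𝕜) ∞) : E →L[𝕜] F :=
  hf.orthogonalFamily.linearIsometry.toContinuousLinearMap ∘L blockDiag c ∘L
    b.repr.toContinuousLinearEquiv.toContinuousLinearMap

theorem weightedShift_apply_self (c : lp (fun _ : ι => 𝕜 →L[𝕜] 𝕜) ∞) (i : ι) :
    weightedShift b hf c (b i) = c i 1 • f i := by
  classical
  change hf.orthogonalFamily.linearIsometry (blockDiag c (b.repr (b i))) = _
  rw [b.repr_self, blockDiag_apply_single, OrthogonalFamily.linearIsometry_apply_single]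
  rfl

theorem norm_weightedShift_le (c : lp (fun _ : ι => 𝕜 →L[𝕜] 𝕜) ∞) :
    ‖weightedShift b hf c‖ ≤ ‖c‖ :=
  ContinuousLinearMap.opNorm_le_bound _ (norm_nonneg c) fun x => by
    simpa [weightedShift] using (blockDiag c).le_of_opNorm_le (norm_blockDiag_le c) (b.repr x)

variable {b hf}

theorem exists_eq_smul_one {c : ι → 𝕜} {C : ℝ} (hc : ∀ i, ‖c i‖ ≤ C) :
    ∃ d : lp (fun _ : ι => 𝕜 →L[𝕜] 𝕜) ∞, ∀ i, d i = c i • 1 :=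
  ⟨⟨fun i => c i • 1, memℓp_infty ⟨C, Set.forall_mem_range.2 fun i => by
    simpa [norm_smul] using hc i⟩⟩, fun _ => rfl⟩

include hf in
theorem exists_clm_apply_eq_smul {c : ι → 𝕜} {C : ℝ} (hc : ∀ i, ‖c i‖ ≤ C) :
    ∃ T : E →L[𝕜] F, ∀ i, T (b i) = c i • f i := by
  obtain ⟨d, hd⟩ := exists_eq_smul_one hc
  exact ⟨weightedShift b hf d, fun i => by simp [weightedShift_apply_self, hd]⟩

theorem exists_eq_weightedShift {T : E →L[𝕜] F} {c : ι → 𝕜} (hT : ∀ i, T (b i) = c i • f i) :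
    ∃ d : lp (fun _ : ι => 𝕜 →L[𝕜] 𝕜) ∞, (∀ i, ‖d i‖ = ‖c i‖) ∧ T = weightedShift b hf d := by
  have hc (i : ι) : ‖c i‖ ≤ ‖T‖ := by
    simpa [hT, norm_smul, hf.1, b.orthonormal.1] using T.le_opNorm (b i)
  obtain ⟨d, hd⟩ := exists_eq_smul_one hc
  refine ⟨d, fun i => by simp [hd, norm_smul], clm_ext_hilbertBasis b fun i => ?_⟩
  simp [weightedShift_apply_self, hd, hT]

include hf in
theorem opNorm_le_of_apply_eq_smul {T : E →L[𝕜] F} {c : ι → 𝕜} (hT : ∀ i, T (b i) = c i • f i)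
    {C : ℝ} (hC : 0 ≤ C) (hc : ∀ i, ‖c i‖ ≤ C) : ‖T‖ ≤ C := by
  obtain ⟨d, hd, rfl⟩ := exists_eq_weightedShift (hf := hf) hT
  exact (norm_weightedShift_le b hf d).trans
    (lp.norm_le_of_forall_le hC fun i => (hd i).trans_le (hc i))

include hf in
theorem isCompactOperator_of_apply_eq_smul {T : E →L[𝕜] F} {c : ι → 𝕜}
    (hT : ∀ i, T (b i) = c i • f i) (hc : Tendsto c cofinite (𝓝 0)) : IsCompactOperator T := by
  obtain ⟨d, hd, rfl⟩ := exists_eq_weightedShift (hf := hf) hT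
  have hcpt : IsCompactOperator (blockDiag d) := isCompactOperator_blockDiag
    (fun i => isCompactOperator_of_locallyCompactSpace_rng (d i)) (by simpa [hd] using hc.norm)
  exact (hcpt.comp_clm b.repr.toContinuousLinearEquiv.toContinuousLinearMap).clm_comp
    hf.orthogonalFamily.linearIsometry.toContinuousLinearMap

end WeightedShift

/-! ### Multi-indices and the degree embedding -/

section MultiIndex

variable {n : ℕ}

/-- The total degree `|k| = k_1 + ⋯ + k_n` of a multi-index. -/
def degree (k : Fin n → ℕ) : ℕ := ∑ m, k m

theorem degree_eq_zero {k : Fin n → ℕ} : degree k = 0 ↔ k = 0 := by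
  simp [degree, funext_iff]

theorem degree_succ (k : Fin (n + 1) → ℕ) : degree k = degree (Fin.init k) + k (Fin.last n) := by
  simp [degree, Fin.sum_univ_castSucc, Fin.init]

theorem degree_init_le (k : Fin (n + 1) → ℕ) : degree (Fin.init k) ≤ degree k :=
  (Nat.le_add_right _ _).trans (degree_succ k).ge

theorem degree_snoc (k : Fin n → ℕ) (m : ℕ) :
    degree (Fin.snoc k m : Fin (n + 1) → ℕ) = degree k + m := by
  simp [degree_succ]

theorem eq_of_degree_eq_of_init_eq {j k : Fin (n + 1) → ℕ} (hdeg : degree j = degree k)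
    (hinit : Fin.init j = Fin.init k) : j = k := by
  rw [degree_succ, degree_succ, hinit] at hdeg
  rw [← Fin.snoc_init_self j, ← Fin.snoc_init_self k, hinit, Nat.add_left_cancel hdeg]

theorem finite_setOf_degree_le (n N : ℕ) : {k : Fin n → ℕ | degree k ≤ N}.Finite :=
  (Set.finite_Iic fun _ : Fin n => N).subset fun k hk i =>
    (Finset.single_le_sum (f := k) (fun _ _ => Nat.zero_le _) (Finset.mem_univ i)).trans hk

theorem tendsto_degree_cofinite (n : ℕ) :
    Tendsto (degree : (Fin n → ℕ) → ℕ) cofinite atTop :=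
  tendsto_atTop.2 fun N => eventually_cofinite.2 <|
    (finite_setOf_degree_le n N).subset fun _ hk => (not_le.1 hk).le

/-- The finite set of multi-indices of degree at most `N`. -/
def degreeLE (n N : ℕ) : Finset (Fin n → ℕ) := (finite_setOf_degree_le n N).toFinset

@[simp]
theorem mem_degreeLE {N : ℕ} {k : Fin n → ℕ} : k ∈ degreeLE n N ↔ degree k ≤ N := by
  simp [degreeLE]

theorem tendsto_degreeLE (n : ℕ) : Tendsto (degreeLE n) atTop atTop :=
  tendsto_atTop_finset_of_monotone
    (fun _ _ h _ hk => mem_degreeLE.2 ((mem_degreeLE.1 hk).trans h))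
    fun k => ⟨degree k, mem_degreeLE.2 le_rfl⟩

/-- The multi-index `k + δ_i`. -/
def raise (i : Fin n) (k : Fin n → ℕ) : Fin n → ℕ := Function.update k i (k i + 1)

theorem raise_eq_add (i : Fin n) (k : Fin n → ℕ) : raise i k = k + Pi.single i 1 := by
  ext m
  rcases eq_or_ne m i with rfl | hm <;> simp [raise, *]

theorem raise_injective (i : Fin n) : Function.Injective (raise i) := fun j k h =>
  add_right_cancel (b := Pi.single i 1) (by simpa only [raise_eq_add] using h)

theorem degree_raise (i : Fin n) (k : Fin n → ℕ) : degree (raise i k) = degree k + 1 := by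
  simp [degree, raise_eq_add, Finset.sum_add_distrib]

theorem exists_raise_eq {k : Fin n → ℕ} (hk : k ≠ 0) : ∃ i l, raise i l = k := by
  obtain ⟨i, hi⟩ := Function.ne_iff.1 hk
  refine ⟨i, Function.update k i (k i - 1), ?_⟩
  rw [raise, Function.update_self, Function.update_idem,
    Nat.sub_add_cancel (Nat.one_le_iff_ne_zero.2 hi), Function.update_eq_self]

theorem init_raise_castSucc (i : Fin n) (k : Fin (n + 1) → ℕ) :
    Fin.init (raise i.castSucc k) = raise i (Fin.init k) := by
  ext m
  simp [raise, Fin.init, Function.update_apply]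

theorem init_raise_last (k : Fin (n + 1) → ℕ) : Fin.init (raise (Fin.last n) k) = Fin.init k := by
  ext m
  simp [raise, Fin.init, (Fin.castSucc_lt_last m).ne]

end MultiIndex

section DegreeCompression

variable {n : ℕ}

/-- The standard orthonormal basis `(e_k)` of `ℓ²(ℕⁿ)`. -/
def stdBasis (n : ℕ) : HilbertBasis (Fin n → ℕ) ℂ (Hn n) :=
  HilbertBasis.ofRepr (LinearIsometryEquiv.refl ℂ _)

@[simp]
theorem coe_stdBasis (n : ℕ) : ⇑(stdBasis n) = en := by
  ext1 k
  rw [← HilbertBasis.repr_symm_single]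
  rfl

theorem orthonormal_en (n : ℕ) : Orthonormal ℂ (en : (Fin n → ℕ) → Hn n) := by
  simpa using (stdBasis n).orthonormal

theorem inner_en_left (k : Fin n → ℕ) (x : Hn n) : ⟪en k, x⟫_ℂ = x k := by
  simp [en, lp.inner_single_left]

theorem clm_ext_en {F : Type*} [NormedAddCommGroup F] [InnerProductSpace ℂ F]
    {S T : Hn n →L[ℂ] F} (h : ∀ k, S (en k) = T (en k)) : S = T :=
  clm_ext_hilbertBasis (stdBasis n) (by simpa using h)

/-- The basis vector `e_l` in the `N`-th summand of `ℓ²(ℕ; ℓ²(ℕⁿ))`. -/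
abbrev blockVec (N : ℕ) (l : Fin n → ℕ) : lp (fun _ : ℕ => Hn n) 2 := lp.single 2 N (en l)

theorem orthonormal_blockVec (n : ℕ) :
    Orthonormal ℂ fun p : ℕ × (Fin n → ℕ) => blockVec p.1 p.2 := by
  classical
  rw [orthonormal_iff_ite]
  rintro ⟨M, k⟩ ⟨N, l⟩
  rw [lp.inner_single_left]
  rcases eq_or_ne M N with rfl | hMN
  · simp [orthonormal_iff_ite.1 (orthonormal_en n)]
  · simp [hMN]

theorem orthonormal_blockVec_degree (n : ℕ) :
    Orthonormal ℂ fun k : Fin (n + 1) → ℕ => blockVec (degree k) (Fin.init k) :=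
  (orthonormal_blockVec n).comp (fun k => (degree k, Fin.init k)) fun _ _ h =>
    eq_of_degree_eq_of_init_eq (Prod.ext_iff.1 h).1 (Prod.ext_iff.1 h).2

/-- The isometry `ℓ²(ℕⁿ⁺¹) → ℓ²(ℕ; ℓ²(ℕⁿ))` that replaces the last coordinate of a multi-index by
its total degree. -/
def degreeEmbed (n : ℕ) : Hn (n + 1) →ₗᵢ[ℂ] lp (fun _ : ℕ => Hn n) 2 :=
  (orthonormal_blockVec_degree n).orthogonalFamily.linearIsometry

theorem degreeEmbed_en (k : Fin (n + 1) → ℕ) :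
    degreeEmbed n (en k) = blockVec (degree k) (Fin.init k) := by
  classical
  exact ((orthonormal_blockVec_degree n).orthogonalFamily.linearIsometry_apply_single 1).trans
    (one_smul ℂ _)

theorem adjoint_degreeEmbed_blockVec {N : ℕ} {l : Fin n → ℕ} (h : N < degree l) :
    adjoint (degreeEmbed n).toContinuousLinearMap (blockVec N l) = 0 := by
  ext k
  have hne : (degree k, Fin.init k) ≠ (N, l) := by
    rintro ⟨rfl, rfl⟩
    exact h.not_ge (degree_init_le k)
  calc adjoint (degreeEmbed n).toContinuousLinearMap (blockVec N l) k
    _ = ⟪en k, adjoint (degreeEmbed n).toContinuousLinearMap (blockVec N l)⟫_ℂ :=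
      (inner_en_left k _).symm
    _ = ⟪blockVec (degree k) (Fin.init k), blockVec N l⟫_ℂ := by
      rw [ContinuousLinearMap.adjoint_inner_right, LinearIsometry.coe_toContinuousLinearMap,
        degreeEmbed_en]
    _ = 0 := (orthonormal_blockVec n).2 hne

theorem degreeEmbed_adjoint_blockVec (N : ℕ) (l : Fin n → ℕ) :
    degreeEmbed n (adjoint (degreeEmbed n).toContinuousLinearMap (blockVec N l)) =
      if degree l ≤ N then blockVec N l else 0 := by
  split_ifs with h
  · have hl : degreeEmbed n (en (Fin.snoc l (N - degree l))) = blockVec N l := by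
      rw [degreeEmbed_en, degree_snoc, Fin.init_snoc, Nat.add_sub_cancel' h]
    have hiso (x : Hn (n + 1)) :
        adjoint (degreeEmbed n).toContinuousLinearMap (degreeEmbed n x) = x :=
      DFunLike.congr_fun (degreeEmbed n).adjoint_comp_self x
    rw [← hl, hiso]
  · rw [adjoint_degreeEmbed_blockVec (not_le.1 h), map_zero]

/-- The orthogonal projection of `ℓ²(ℕⁿ)` onto the vectors of degree at most `N`. -/
def degreeProj (n N : ℕ) : Hn n →L[ℂ] Hn n := coordProjection en (degreeLE n N)

theorem degreeProj_en (N : ℕ) (k : Fin n → ℕ) :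
    degreeProj n N (en k) = if degree k ≤ N then en k else 0 := by
  classical
  simp [degreeProj, coordProjection_apply_self (orthonormal_en n)]

theorem isStarProjection_degreeProj (n N : ℕ) : IsStarProjection (degreeProj n N) :=
  isStarProjection_coordProjection (orthonormal_en n) _

/-- The family of projections `degreeProj n N`, as an element of `ℓ^∞`. -/
def degreeProjFamily (n : ℕ) : lp (fun _ : ℕ => Hn n →L[ℂ] Hn n) ∞ :=
  ⟨degreeProj n, memℓp_infty ⟨1, Set.forall_mem_range.2 fun N =>
    (isStarProjection_degreeProj n N).norm_le⟩⟩

theorem degreeProjFamily_apply (n N : ℕ) : degreeProjFamily n N = degreeProj n N := rfl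

theorem degreeEmbed_comp_adjoint (n : ℕ) : (degreeEmbed n).toContinuousLinearMap ∘L
    adjoint (degreeEmbed n).toContinuousLinearMap = blockDiag (degreeProjFamily n) := by
  classical
  refine lp.ext_continuousLinearMap (by simp) fun N => clm_ext_en fun l => ?_
  change degreeEmbed n (adjoint (degreeEmbed n).toContinuousLinearMap (blockVec N l)) =
    blockDiag _ (blockVec N l)
  rw [degreeEmbed_adjoint_blockVec, blockDiag_apply_single, degreeProjFamily_apply, degreeProj_en]
  split_ifs <;> simp

/-- The block compression of `ℓ²(ℕⁿ⁺¹)` given by `degreeEmbed n`, with the projections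
`degreeProj n N` as blocks. -/
def degreeCompression (n : ℕ) : BlockCompression (Hn n) (Hn (n + 1)) where
  embed := degreeEmbed n
  proj := degreeProjFamily n
  embed_comp_adjoint := degreeEmbed_comp_adjoint n
  isCompactOperator_proj N := isCompactOperator_coordProjection _ _
  tendsto_proj x := by
    have h := (tendsto_coordProjection (stdBasis n) x).comp (tendsto_degreeLE n)
    rwa [coe_stdBasis] at h

end DegreeCompression

/-! ### The generators of `B_n(q)` -/

section ShiftWeight

variable {n : ℕ} {r : ℝ}

theorem shiftIdx_eq_rev (j : Fin n) : shiftIdx j = j.rev := by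
  ext
  simp only [shiftIdx, Fin.val_rev]
  omega

/-- The weight `r^{k_1 + ⋯ + k_{i-1}} (1 - r^{2(k_i + 1)})^{1/2}` of `e_k` under the generator which
shifts the `i`-th coordinate, where `r = q⁻¹`. -/
def shiftWeight (r : ℝ) (i : Fin n) (k : Fin n → ℕ) : ℝ :=
  r ^ (∑ m ∈ Finset.Iio i, k m) * √(1 - r ^ (2 * (k i + 1)))

theorem shiftWeight_pos (hr₀ : 0 < r) (hr₁ : r < 1) (i : Fin n) (k : Fin n → ℕ) :
    0 < shiftWeight r i k :=
  mul_pos (pow_pos hr₀ _) <|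
    Real.sqrt_pos.2 <| sub_pos.2 <| pow_lt_one₀ hr₀.le hr₁ (Nat.succ_ne_zero _)

theorem shiftWeight_le_one (hr₀ : 0 < r) (hr₁ : r < 1) (i : Fin n) (k : Fin n → ℕ) :
    shiftWeight r i k ≤ 1 :=
  mul_le_one₀ (pow_le_one₀ hr₀.le hr₁.le) (Real.sqrt_nonneg _) <|
    Real.sqrt_le_one.2 <| sub_le_self 1 (pow_nonneg hr₀.le _)

theorem shiftWeight_castSucc (r : ℝ) (i : Fin n) (k : Fin (n + 1) → ℕ) :
    shiftWeight r i.castSucc k = shiftWeight r i (Fin.init k) := by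
  simp [shiftWeight, Fin.init, ← Fin.map_castSuccEmb_Iio]

theorem shiftWeight_last (r : ℝ) (k : Fin (n + 1) → ℕ) :
    shiftWeight r (Fin.last n) k =
      r ^ degree (Fin.init k) * √(1 - r ^ (2 * (k (Fin.last n) + 1))) := by
  simp [shiftWeight, Fin.Iio_last_eq_map, degree, Fin.init]

theorem tendsto_pow_degree (hr₀ : 0 < r) (hr₁ : r < 1) (n : ℕ) :
    Tendsto (fun k : Fin n → ℕ => r ^ degree k) cofinite (𝓝 0) :=
  (tendsto_pow_atTop_nhds_zero_of_lt_one hr₀.le hr₁).comp (tendsto_degree_cofinite n)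

theorem abs_shiftWeight_last_sub_le (hr₀ : 0 < r) (hr₁ : r < 1) (k : Fin (n + 1) → ℕ) :
    |shiftWeight r (Fin.last n) k - r ^ degree (Fin.init k)| ≤ r ^ degree k := by
  have ht : r ^ (2 * (k (Fin.last n) + 1)) ≤ r ^ k (Fin.last n) :=
    pow_le_pow_of_le_one hr₀.le hr₁.le (by omega)
  have ht₀ : 0 < r ^ (2 * (k (Fin.last n) + 1)) := pow_pos hr₀ _
  rw [shiftWeight_last, ← mul_sub_one, abs_mul, abs_of_pos (pow_pos hr₀ _), degree_succ, pow_add]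
  refine mul_le_mul_of_nonneg_left ?_ (pow_pos hr₀ _).le
  set t := r ^ (2 * (k (Fin.last n) + 1))
  have hle : √(1 - t) ≤ 1 := Real.sqrt_le_one.2 (by linarith)
  have hge : 1 - t ≤ √(1 - t) := by
    rcases le_total t 1 with h | h
    · exact Real.le_sqrt_of_sq_le (by nlinarith)
    · exact (sub_nonpos.2 h).trans (Real.sqrt_nonneg _)
  rw [abs_sub_comm, abs_of_nonneg (by linarith)]
  linarith

end ShiftWeight

section Generators

variable {n : ℕ} {q : ℝ} {w : Fin (n + 1) → (Hn n →L[ℂ] Hn n)}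

theorem isWFamily_iff : IsWFamily q w ↔
    (∀ k, w 0 (en k) = ((q⁻¹ ^ degree k : ℝ) : ℂ) • en k) ∧
      ∀ j k, w (Fin.succ j) (en k) = (shiftWeight q⁻¹ j.rev k : ℂ) • en (raise j.rev k) := by
  have hzpow (m : ℕ) : q ^ (-(m : ℤ)) = q⁻¹ ^ m := by rw [zpow_neg, zpow_natCast, inv_pow]
  have hIio (j : Fin n) : Finset.univ.filter (fun m : Fin n => (m : ℕ) < n - 1 - (j : ℕ)) =
      Finset.Iio j.rev := by
    ext m
    simp only [Finset.mem_filter_univ, Finset.mem_Iio, Fin.lt_def, Fin.val_rev]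
    omega
  have hsqrt (m : ℕ) : q ^ (-2 * ((m : ℤ) + 1)) = q⁻¹ ^ (2 * (m + 1)) := by
    rw [← hzpow]
    congr 1
  simp only [IsWFamily, Complex.coe_smul, shiftIdx_eq_rev, hIio, hsqrt, ← Nat.cast_sum, hzpow]
  rfl

theorem IsWFamily.apply_zero (hw : IsWFamily q w) (k : Fin n → ℕ) :
    w 0 (en k) = ((q⁻¹ ^ degree k : ℝ) : ℂ) • en k :=
  (isWFamily_iff.1 hw).1 k

theorem IsWFamily.apply_succ (hw : IsWFamily q w) (j : Fin n) (k : Fin n → ℕ) :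
    w j.succ (en k) = (shiftWeight q⁻¹ j.rev k : ℂ) • en (raise j.rev k) :=
  (isWFamily_iff.1 hw).2 j k

theorem orthonormal_en_raise (i : Fin n) : Orthonormal ℂ fun k => (en (raise i k) : Hn n) :=
  (orthonormal_en n).comp _ (raise_injective i)

theorem exists_isWFamily (hq : 1 < q) (n : ℕ) :
    ∃ w : Fin (n + 1) → (Hn n →L[ℂ] Hn n), IsWFamily q w := by
  have hr₀ : 0 < q⁻¹ := inv_pos.2 (one_pos.trans hq)
  have hr₁ : q⁻¹ < 1 := inv_lt_one_of_one_lt₀ hq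
  obtain ⟨d, hd⟩ := exists_clm_apply_eq_smul (b := stdBasis n) (hf := orthonormal_en n)
    (c := fun k => ((q⁻¹ ^ degree k : ℝ) : ℂ)) (C := 1) fun k => by
      rw [Complex.norm_of_nonneg (pow_nonneg hr₀.le _)]
      exact pow_le_one₀ hr₀.le hr₁.le
  have hshift (j : Fin n) : ∃ T : Hn n →L[ℂ] Hn n, ∀ k,
      T (en k) = (shiftWeight q⁻¹ j.rev k : ℂ) • en (raise j.rev k) := by
    have h := exists_clm_apply_eq_smul (b := stdBasis n) (hf := orthonormal_en_raise j.rev)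
      (c := fun k => (shiftWeight q⁻¹ j.rev k : ℂ)) (C := 1) fun k => by
        rw [Complex.norm_of_nonneg (shiftWeight_pos hr₀ hr₁ _ _).le]
        exact shiftWeight_le_one hr₀ hr₁ _ _
    rwa [coe_stdBasis] at h
  choose T hT using hshift
  rw [coe_stdBasis] at hd
  exact ⟨Fin.cons d T, isWFamily_iff.2 ⟨hd, hT⟩⟩

theorem IsWFamily.isSelfAdjoint_zero (hw : IsWFamily q w) : IsSelfAdjoint (w 0) := by
  classical
  refine ContinuousLinearMap.isSelfAdjoint_iff'.2 (clm_ext_en fun k => ?_)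
  ext j
  rw [← inner_en_left, ContinuousLinearMap.adjoint_inner_right, hw.apply_zero, hw.apply_zero,
    ← inner_en_left, inner_smul_left, inner_smul_right, orthonormal_iff_ite.1 (orthonormal_en n),
    Complex.conj_ofReal]
  split_ifs with h <;> simp [h]

theorem IsWFamily.isCompactOperator_zero (hw : IsWFamily q w) (hq : 1 < q) :
    IsCompactOperator (w 0) := by
  refine isCompactOperator_of_apply_eq_smul (b := stdBasis n) (hf := orthonormal_en n)
    (c := fun k => ((q⁻¹ ^ degree k : ℝ) : ℂ)) (by simpa using hw.apply_zero) ?_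
  exact_mod_cast (Complex.continuous_ofReal.tendsto 0).comp
    (tendsto_pow_degree (inv_pos.2 (one_pos.trans hq)) (inv_lt_one_of_one_lt₀ hq) n)

theorem IsWFamily.star_mul_mem_compactOps (hw : IsWFamily q w) (hq : 1 < q) {i j : Fin (n + 1)}
    (h : i = 0 ∨ j = 0) : star (w i) * w j ∈ compactOps (Hn n) := by
  have h₀ : w 0 ∈ compactOps (Hn n) := mem_compactOps.2 (hw.isCompactOperator_zero hq)
  rcases h with rfl | rfl
  · exact mul_mem_compactOps_right (star_mem h₀) _
  · exact mul_mem_compactOps_left h₀ _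

end Generators

section ProjAlg

variable {n : ℕ} {q : ℝ} {w : Fin (n + 1) → (Hn n →L[ℂ] Hn n)}

theorem isClosed_projAlg (w : Fin (n + 1) → (Hn n →L[ℂ] Hn n)) :
    IsClosed (projAlg w : Set (Hn n →L[ℂ] Hn n)) :=
  StarSubalgebra.isClosed_topologicalClosure _

theorem star_mul_mem_projAlg (w : Fin (n + 1) → (Hn n →L[ℂ] Hn n)) (i j : Fin (n + 1)) :
    star (w i) * w j ∈ projAlg w :=
  StarSubalgebra.le_topologicalClosure _ (StarAlgebra.subset_adjoin ℂ _ ⟨i, j, rfl⟩)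

theorem IsWFamily.star_mul_zero_pow_apply (hw : IsWFamily q w) (m : ℕ) (k : Fin n → ℕ) :
    ((star (w 0) * w 0) ^ m) (en k) = (((q⁻¹ ^ m) ^ (2 * degree k) : ℝ) : ℂ) • en k := by
  induction m with
  | zero => simp
  | succ m ih =>
    rw [hw.isSelfAdjoint_zero.star_eq] at ih ⊢
    rw [pow_succ', mul_apply_eq_comp, ih, map_smul, mul_apply_eq_comp,
      hw.apply_zero, map_smul, hw.apply_zero, smul_smul, smul_smul]
    congr 1
    push_cast
    ring

theorem IsWFamily.norm_star_mul_zero_pow_sub_le (hw : IsWFamily q w) (hq : 1 < q) (m : ℕ) :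
    ‖(star (w 0) * w 0) ^ m - rankOne ℂ (en 0) (en 0)‖ ≤ q⁻¹ ^ m := by
  classical
  have hr₀ : 0 ≤ q⁻¹ ^ m := (pow_pos (inv_pos.2 (one_pos.trans hq)) m).le
  have hr₁ : q⁻¹ ^ m ≤ 1 :=
    pow_le_one₀ (inv_pos.2 (one_pos.trans hq)).le (inv_lt_one_of_one_lt₀ hq).le
  refine opNorm_le_of_apply_eq_smul (b := stdBasis n) (hf := orthonormal_en n)
    (c := fun k => if k = 0 then 0 else (((q⁻¹ ^ m) ^ (2 * degree k) : ℝ) : ℂ)) (fun k => ?_)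
    hr₀ fun k => ?_
  · rw [coe_stdBasis, sub_apply, hw.star_mul_zero_pow_apply, rankOne_apply,
      orthonormal_iff_ite.1 (orthonormal_en n)]
    rcases eq_or_ne k 0 with rfl | hk
    · simp [degree_eq_zero.2 rfl]
    · simp [hk, hk.symm]
  · split_ifs with hk
    · simpa using hr₀
    · rw [Complex.norm_of_nonneg (pow_nonneg hr₀ _)]
      exact pow_le_of_le_one hr₀ hr₁ (mul_ne_zero two_ne_zero (mt degree_eq_zero.1 hk))

theorem IsWFamily.rankOne_mem_projAlg (hw : IsWFamily q w) (hq : 1 < q) :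
    rankOne ℂ (en 0) (en 0) ∈ projAlg w := by
  refine (isClosed_projAlg w).mem_of_tendsto (b := atTop)
    (f := fun m : ℕ => (star (w 0) * w 0) ^ m) (tendsto_iff_norm_sub_tendsto_zero.2 ?_)
    (Eventually.of_forall fun m => pow_mem (star_mul_mem_projAlg w 0 0) m)
  exact squeeze_zero (fun _ => norm_nonneg _) (hw.norm_star_mul_zero_pow_sub_le hq)
    (tendsto_pow_atTop_nhds_zero_of_lt_one (inv_pos.2 (one_pos.trans hq)).le
      (inv_lt_one_of_one_lt₀ hq))

theorem IsWFamily.exists_apply_en_raise (hw : IsWFamily q w) (hq : 1 < q) (i : Fin n)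
    (k : Fin n → ℕ) : ∃ a ∈ projAlg w, a (en k) = en (raise i k) := by
  have hr₀ : 0 < q⁻¹ := inv_pos.2 (one_pos.trans hq)
  set c : ℂ := shiftWeight q⁻¹ i k * (q⁻¹ ^ degree (raise i k) : ℝ) with hc
  have hc₀ : c ≠ 0 := mul_ne_zero
    (Complex.ofReal_ne_zero.2 (shiftWeight_pos hr₀ (inv_lt_one_of_one_lt₀ hq) i k).ne')
    (Complex.ofReal_ne_zero.2 (pow_pos hr₀ _).ne')
  refine ⟨c⁻¹ • (star (w 0) * w i.rev.succ),
    SMulMemClass.smul_mem _ (star_mul_mem_projAlg w _ _), ?_⟩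
  rw [hw.isSelfAdjoint_zero.star_eq, smul_apply,
    mul_apply_eq_comp, hw.apply_succ, Fin.rev_rev, map_smul, hw.apply_zero,
    smul_smul _ _ (en _), ← hc, inv_smul_smul₀ hc₀]

theorem IsWFamily.exists_apply_en_zero (hw : IsWFamily q w) (hq : 1 < q) (k : Fin n → ℕ) :
    ∃ a ∈ projAlg w, a (en 0) = en k := by
  induction hN : degree k generalizing k with
  | zero => exact ⟨1, one_mem _, by rw [degree_eq_zero.1 hN, one_apply_eq_self]⟩
  | succ N ih =>
    have hk : k ≠ 0 := fun h => by simp [degree_eq_zero.2 h] at hN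
    obtain ⟨i, l, rfl⟩ := exists_raise_eq hk
    obtain ⟨a, ha, hal⟩ := ih l (by simpa [degree_raise] using hN)
    obtain ⟨b, hb, hbl⟩ := hw.exists_apply_en_raise hq i l
    exact ⟨b * a, mul_mem hb ha, by rw [mul_apply_eq_comp, hal, hbl]⟩

theorem IsWFamily.mem_projAlg_of_mem_compactOps (hw : IsWFamily q w) (hq : 1 < q)
    {T : Hn n →L[ℂ] Hn n} (hT : T ∈ compactOps (Hn n)) : T ∈ projAlg w :=
  compactOps_le_of_rankOne_mem (stdBasis n) (isClosed_projAlg w) (hw.rankOne_mem_projAlg hq)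
    (by simpa using hw.exists_apply_en_zero hq) hT

end ProjAlg

/-! ### The extension of `B_n(q)` by compact operators -/

section Intertwining

variable {n : ℕ} {q : ℝ} {w : Fin (n + 2) → (Hn (n + 1) →L[ℂ] Hn (n + 1))}
  {w' : Fin (n + 1) → (Hn n →L[ℂ] Hn n)}

/-- The isometry of `ℓ²(ℕ; ℓ²(ℕⁿ))` that shifts the summands, `v` in the `N`-th one going to `v` in
the `N + 1`-st one. -/
def blockShift (n : ℕ) : lp (fun _ : ℕ => Hn n) 2 →ₗᵢ[ℂ] lp (fun _ : ℕ => Hn n) 2 :=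
  reindexIsometry ℂ (Hn n) Nat.succ_injective

theorem blockShift_ampliation_degreeEmbed_en (a : Hn n →L[ℂ] Hn n) (k : Fin (n + 1) → ℕ) :
    blockShift n (ampliation ℕ a (degreeEmbed n (en k))) =
      lp.single (E := fun _ : ℕ => Hn n) 2 (degree k + 1) (a (en (Fin.init k))) := by
  rw [degreeEmbed_en, blockDiag_apply_single, blockShift, reindexIsometry_single,
    constFamily_apply]

theorem degreeEmbed_en_raise (i : Fin (n + 1)) (k : Fin (n + 1) → ℕ) :
    degreeEmbed n (en (raise i k)) = blockVec (degree k + 1) (Fin.init (raise i k)) := by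
  rw [degreeEmbed_en, degree_raise]

/-- The failure of `degreeEmbed n` to intertwine `y` on `ℓ²(ℕⁿ⁺¹)` with `diag(a, a, …)` followed by
the shift of the degree. It is compact for the generators `y = w j.succ` and `a = w' j` of two
consecutive levels. -/
def intertwiningDefect (a : Hn n →L[ℂ] Hn n) (y : Hn (n + 1) →L[ℂ] Hn (n + 1)) :
    Hn (n + 1) →L[ℂ] lp (fun _ : ℕ => Hn n) 2 :=
  (degreeCompression n).embedL ∘L y -
    (blockShift n).toContinuousLinearMap ∘L ampliation ℕ a ∘L (degreeCompression n).embedL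

theorem intertwiningDefect_en (a : Hn n →L[ℂ] Hn n) (y : Hn (n + 1) →L[ℂ] Hn (n + 1))
    (k : Fin (n + 1) → ℕ) : intertwiningDefect a y (en k) = degreeEmbed n (y (en k)) -
      lp.single (E := fun _ : ℕ => Hn n) 2 (degree k + 1) (a (en (Fin.init k))) :=
  congr(degreeEmbed n (y (en k)) - $(blockShift_ampliation_degreeEmbed_en a k))

theorem IsWFamily.intertwiningDefect_succ (hw : IsWFamily q w) (hw' : IsWFamily q w')
    (j : Fin n) : intertwiningDefect (w' j.succ) (w j.succ.succ) = 0 :=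
  clm_ext_en fun k => by
    rw [intertwiningDefect_en, hw.apply_succ, hw'.apply_succ, Fin.rev_succ, shiftWeight_castSucc,
      map_smul, degreeEmbed_en_raise, init_raise_castSucc, lp.single_smul, sub_self,
      zero_apply]

theorem IsWFamily.intertwiningDefect_zero_apply (hw : IsWFamily q w) (hw' : IsWFamily q w')
    (k : Fin (n + 1) → ℕ) : intertwiningDefect (w' 0) (w (Fin.succ 0)) (en k) =
      ((shiftWeight q⁻¹ (Fin.last n) k - q⁻¹ ^ degree (Fin.init k) : ℝ) : ℂ) •
        blockVec (degree k + 1) (Fin.init k) := by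
  rw [intertwiningDefect_en, hw.apply_succ, hw'.apply_zero, Fin.rev_zero, map_smul,
    degreeEmbed_en_raise, init_raise_last, lp.single_smul, Complex.ofReal_sub, sub_smul]

theorem orthonormal_blockVec_degree_succ (n : ℕ) :
    Orthonormal ℂ fun k : Fin (n + 1) → ℕ => blockVec (degree k + 1) (Fin.init k) :=
  (orthonormal_blockVec n).comp (fun k => (degree k + 1, Fin.init k)) fun _ _ h =>
    eq_of_degree_eq_of_init_eq (Nat.succ_injective (Prod.ext_iff.1 h).1) (Prod.ext_iff.1 h).2

theorem IsWFamily.isCompactOperator_intertwiningDefect (hw : IsWFamily q w)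
    (hw' : IsWFamily q w') (hq : 1 < q) (j : Fin (n + 1)) :
    IsCompactOperator (intertwiningDefect (w' j) (w j.succ)) := by
  induction j using Fin.cases with
  | zero =>
    have hr₀ : 0 < q⁻¹ := inv_pos.2 (one_pos.trans hq)
    have hr₁ : q⁻¹ < 1 := inv_lt_one_of_one_lt₀ hq
    refine isCompactOperator_of_apply_eq_smul (b := stdBasis (n + 1))
      (hf := orthonormal_blockVec_degree_succ n)
      (fun k => by rw [coe_stdBasis]; exact hw.intertwiningDefect_zero_apply hw' k) ?_
    refine squeeze_zero_norm (fun k => ?_) (tendsto_pow_degree hr₀ hr₁ (n + 1))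
    rw [Complex.norm_real]
    exact abs_shiftWeight_last_sub_le hr₀ hr₁ k
  | succ j =>
    rw [hw.intertwiningDefect_succ hw']
    exact _root_.isCompactOperator_zero

theorem IsWFamily.star_mul_sub_compress_mem_compactOps (hw : IsWFamily q w)
    (hw' : IsWFamily q w') (hq : 1 < q) (i j : Fin (n + 1)) :
    star (w i.succ) * w j.succ - (degreeCompression n).compress (star (w' i) * w' j) ∈
      compactOps (Hn (n + 1)) :=
  (degreeCompression n).star_mul_sub_compress_mem_compactOps
    (hw.isCompactOperator_intertwiningDefect hw' hq i)
    (hw.isCompactOperator_intertwiningDefect hw' hq j)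

end Intertwining

section Quasidiagonality

variable {n : ℕ} {q : ℝ} {w : Fin (n + 1) → (Hn n →L[ℂ] Hn n)}

theorem IsWFamily.degreeProj_succ_mul (hw : IsWFamily q w) (j : Fin n) (N : ℕ) :
    degreeProj n (N + 1) * w j.succ = w j.succ * degreeProj n N :=
  clm_ext_en fun k => by
    simp only [mul_apply_eq_comp, hw.apply_succ, map_smul, degreeProj_en, degree_raise,
      add_le_add_iff_right]
    split_ifs
    · rw [hw.apply_succ]
    · rw [smul_zero, map_zero]

theorem IsWFamily.commute_degreeProj (hw : IsWFamily q w) (i j : Fin n) (N : ℕ) :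
    degreeProj n N * (star (w i.succ) * w j.succ) =
      star (w i.succ) * w j.succ * degreeProj n N := by
  have hstar := congr(star $(hw.degreeProj_succ_mul i N))
  simp only [star_mul, (isStarProjection_degreeProj n _).isSelfAdjoint.star_eq] at hstar
  rw [← mul_assoc, ← hstar, mul_assoc, hw.degreeProj_succ_mul, mul_assoc]

theorem IsWFamily.star_mul_mem_quasiDiagonal (hw : IsWFamily q w) (hq : 1 < q)
    (i j : Fin (n + 1)) : star (w i) * w j ∈ (degreeCompression n).quasiDiagonal := by
  by_cases h : i = 0 ∨ j = 0
  · exact (degreeCompression n).compactOps_le_quasiDiagonal (hw.star_mul_mem_compactOps hq h)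
  · obtain ⟨hi, hj⟩ := not_or.1 h
    obtain ⟨i, rfl⟩ := Fin.exists_succ_eq.2 hi
    obtain ⟨j, rfl⟩ := Fin.exists_succ_eq.2 hj
    exact tendsto_const_nhds.congr fun N => (sub_eq_zero.2 (hw.commute_degreeProj i j N)).symm

end Quasidiagonality

section SymbolHom

variable {n : ℕ} {q : ℝ} {w : Fin (n + 2) → (Hn (n + 1) →L[ℂ] Hn (n + 1))}
  {w' : Fin (n + 1) → (Hn n →L[ℂ] Hn n)}

theorem IsWFamily.star_mul_mem_symbolGraph (hw : IsWFamily q w) (hw' : IsWFamily q w')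
    (hq : 1 < q) (i j : Fin (n + 1)) :
    (star (w i.succ) * w j.succ, star (w' i) * w' j) ∈ (degreeCompression n).symbolGraph :=
  ⟨hw'.star_mul_mem_quasiDiagonal hq i j, hw.star_mul_sub_compress_mem_compactOps hw' hq i j⟩

theorem IsWFamily.exists_snd_mem_symbolGraph (hw : IsWFamily q w) (hw' : IsWFamily q w')
    (hq : 1 < q) {y : Hn (n + 1) →L[ℂ] Hn (n + 1)} (hy : y ∈ projAlg w) :
    ∃ a ∈ projAlg w', (y, a) ∈ (degreeCompression n).symbolGraph := by
  refine (degreeCompression n).exists_snd_mem_symbolGraph (isClosed_projAlg w') ?_ hy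
  rintro _ ⟨i, j, rfl⟩
  by_cases h : i = 0 ∨ j = 0
  · refine ⟨0, zero_mem _, zero_mem _, ?_⟩
    simpa using hw.star_mul_mem_compactOps hq h
  · obtain ⟨hi, hj⟩ := not_or.1 h
    obtain ⟨i, rfl⟩ := Fin.exists_succ_eq.2 hi
    obtain ⟨j, rfl⟩ := Fin.exists_succ_eq.2 hj
    exact ⟨_, star_mul_mem_projAlg w' i j, hw.star_mul_mem_symbolGraph hw' hq i j⟩

theorem IsWFamily.exists_fst_mem_symbolGraph (hw : IsWFamily q w) (hw' : IsWFamily q w')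
    (hq : 1 < q) {a : Hn n →L[ℂ] Hn n} (ha : a ∈ projAlg w') :
    ∃ y ∈ projAlg w, (y, a) ∈ (degreeCompression n).symbolGraph := by
  refine (degreeCompression n).exists_fst_mem_symbolGraph (isClosed_projAlg w)
    (fun _ => hw.mem_projAlg_of_mem_compactOps hq) ?_ ha
  rintro _ ⟨i, j, rfl⟩
  exact ⟨_, star_mul_mem_projAlg w _ _, hw.star_mul_mem_symbolGraph hw' hq i j⟩

theorem IsWFamily.exists_symbolHom (hw : IsWFamily q w) (hw' : IsWFamily q w') (hq : 1 < q) :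
    ∃ ρ : projAlg w →⋆ₐ[ℂ] projAlg w', Continuous ρ ∧ Function.Surjective ρ ∧
      ∀ y, ρ y = 0 ↔ (y : Hn (n + 1) →L[ℂ] Hn (n + 1)) ∈ compactOps (Hn (n + 1)) :=
  (degreeCompression n).exists_symbolHom (fun _ => hw.exists_snd_mem_symbolGraph hw' hq)
    fun _ => hw.exists_fst_mem_symbolGraph hw' hq

theorem IsWFamily.exists_bijective_ker_symbolHom (hw : IsWFamily q w) (hq : 1 < q)
    {ρ : projAlg w →⋆ₐ[ℂ] projAlg w'}
    (hρ : ∀ y, ρ y = 0 ↔ (y : Hn (n + 1) →L[ℂ] Hn (n + 1)) ∈ compactOps (Hn (n + 1))) :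
    ∃ ψ : (⊥ : NonUnitalStarSubalgebra ℂ (projAlg w')).comap ρ.toNonUnitalStarAlgHom →⋆ₙₐ[ℂ]
      compactOps (Hn (n + 1)), Function.Bijective ψ := by
  have hker (y : projAlg w) :
      y ∈ (⊥ : NonUnitalStarSubalgebra ℂ (projAlg w')).comap ρ.toNonUnitalStarAlgHom ↔
        (y : Hn (n + 1) →L[ℂ] Hn (n + 1)) ∈ compactOps (Hn (n + 1)) :=
    NonUnitalStarAlgebra.mem_bot.trans (hρ y)
  refine ⟨NonUnitalStarAlgHom.codRestrict ((projAlg w).subtype.toNonUnitalStarAlgHom.comp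
    (NonUnitalStarSubalgebraClass.subtype _)) (compactOps (Hn (n + 1))) fun y => (hker _).1 y.2,
    fun x y h => ?_, fun T => ?_⟩
  · exact Subtype.ext (Subtype.ext congr(($h : Hn (n + 1) →L[ℂ] Hn (n + 1))))
  · exact ⟨⟨⟨T, hw.mem_projAlg_of_mem_compactOps hq T.2⟩, (hker _).2 T.2⟩, rfl⟩

end SymbolHom

section Induction

theorem exists_algebraMap_eq (T : Hn 0 →L[ℂ] Hn 0) : ∃ c : ℂ, algebraMap ℂ _ c = T := by
  refine ⟨T (en 0) 0, clm_ext_en fun k => ?_⟩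
  rw [Subsingleton.elim k 0, Algebra.algebraMap_eq_smul_one]
  ext l
  simp [Subsingleton.elim l 0, en]

theorem exists_bijective_character (A : StarSubalgebra ℂ (Hn 0 →L[ℂ] Hn 0)) :
    ∃ φ : A →⋆ₐ[ℂ] ℂ, Function.Bijective φ := by
  have : Nontrivial (Hn 0) := ⟨en 0, 0, (orthonormal_en 0).ne_zero 0⟩
  have hbij : Function.Bijective (StarAlgHom.ofId ℂ A) := by
    refine ⟨(algebraMap ℂ A).injective, fun T => ?_⟩
    obtain ⟨c, hc⟩ := exists_algebraMap_eq (T : Hn 0 →L[ℂ] Hn 0)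
    exact ⟨c, Subtype.ext hc⟩
  exact ⟨(StarAlgEquiv.ofBijective _ hbij).symm, (StarAlgEquiv.ofBijective _ hbij).symm.bijective⟩

theorem IsWFamily.exists_isCompositionSequence {q : ℝ} (hq : 1 < q) (n : ℕ)
    {w : Fin (n + 1) → (Hn n →L[ℂ] Hn n)} (hw : IsWFamily q w) :
    ∃ I : ℕ → NonUnitalStarSubalgebra ℂ (projAlg w),
      IsCompositionSequence (fun k => compactOps (Hn k)) n I := by
  induction n with
  | zero =>
    obtain ⟨φ, hφ⟩ := exists_bijective_character (projAlg w)
    exact ⟨_, isCompositionSequence_zero _ hφ⟩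
  | succ n ih =>
    obtain ⟨w', hw'⟩ := exists_isWFamily hq n
    obtain ⟨I, hI⟩ := ih hw'
    obtain ⟨ρ, hρc, hρ, hker⟩ := hw.exists_symbolHom hw' hq
    obtain ⟨ψ, hψ⟩ := hw.exists_bijective_ker_symbolHom hq hker
    exact ⟨_, hI.pullbackChain hρc hρ hψ⟩

end Induction

/-- For every `n ≥ 1` and real `q > 1`, `B_n(q)` (the concrete realization of
`C(ℂP_q^n)`) has a composition sequence `B_n(q) = I_0 ⊇ I_1 ⊇ ⋯ ⊇ I_n ⊇ I_{n+1} = 0` of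
closed two-sided ideals such that `I_0/I_1 ≅ ℂ` (witnessed by a surjective unital
*-homomorphism `B_n(q) → ℂ` with kernel `I_1`) and, for `1 ≤ k ≤ n`,
`I_k/I_{k+1} ≅ K(ℓ²(ℕᵏ)) ≅ K(ℓ²(ℤᵏ))` (witnessed by a surjective *-homomorphism
`I_k → K(ℓ²(ℕᵏ))` with kernel `I_{k+1}`). -/
theorem stmt_2 (n : ℕ) (hn : 1 ≤ n) (q : ℝ) (hq : 1 < q)
    (w : Fin (n + 1) → (Hn n →L[ℂ] Hn n)) (hw : IsWFamily q w) :
    ∃ I : ℕ → NonUnitalStarSubalgebra ℂ (projAlg w),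
      (∀ x : projAlg w, x ∈ I 0) ∧
      (∀ k : ℕ, k ≤ n → I (k + 1) ≤ I k) ∧
      (∀ x : projAlg w, x ∈ I (n + 1) ↔ x = 0) ∧
      (∀ k : ℕ, k ≤ n + 1 → IsClosed ((I k : Set (projAlg w)))) ∧
      (∀ k : ℕ, k ≤ n + 1 → ∀ a x : projAlg w, a ∈ I k → x * a ∈ I k ∧ a * x ∈ I k) ∧
      (∃ φ₀ : (projAlg w) →⋆ₐ[ℂ] ℂ,
        Function.Surjective φ₀ ∧ ∀ x : projAlg w, φ₀ x = 0 ↔ x ∈ I 1) ∧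
      (∀ k : ℕ, 1 ≤ k → k ≤ n →
        ∃ ψ : (I k) →⋆ₙₐ[ℂ] (compactOps (Hn k)),
          Function.Surjective ψ ∧
          ∀ x : I k, ψ x = 0 ↔ (x : projAlg w) ∈ I (k + 1)) := by
  obtain ⟨I, h⟩ := hw.exists_isCompositionSequence hq
  exact ⟨I, h.mem_zero, h.succ_le, h.mem_last, h.isClosed, h.mul_mem, h.exists_character,
    h.exists_factor⟩
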